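/- Let d = 2 and let a > 0, γ > 0. Let V₁, V₂ : ℝ² → ℝ with V₁ continuously differentiable, satisfying |V₁(x)| ≤ a(1+|x|)^{−γ}, |V₂(x)| ≤ a(1+|x|)^{−γ−1} and ∂_rV₁(x) ≤ a(1+|x|)^{−γ−1} for all x. Then there exist τ₀ > 0 and B(τ₀) > 0 (depending on a, γ) and an absolute constant C (independent of ε and τ) such that for every ε ≠ 0, every τ ≥ B(τ₀), and every classical solution u of −Δu + (V₁+V₂)u ± iεu − τu = f with u, ∇u ∈ L²(ℝ²) and f ∈ L²(ℝ²), one has ‖∇u‖²_{X_{τ₀}} + τ‖u‖²_{X_{τ₀}} + sup_{R≥τ₀} R^{−2}∫_{|x|=R} |u(x)|² dσ_R(x) ≤ C‖f‖²_{X*_{τ₀}}. -/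

import Mathlib

/-!
This is a Morawetz estimate, with `τ₀ = 1`. For `R ≥ 1` put `w = (R² + |x|²)^{-1/2}` and test the
equation with `w (x·∇ū + (d-1)/2 ū)`. Up to a divergence, the real part contains
`½ R² w³ (|∇u|² + τ|u|²)` with the good sign, and `R² w³ ≥ 1/(3R)` on `B(0,R)`, so the supremum over
`R ≥ 1` bounds `Q = ‖∇u‖²_X + τ‖u‖²_X`. In dimension two the remaining zeroth order term in `|u|²`
has no sign, but it is `O((1 + |x|)^{-3} |u|²)` and behaves like a short-range potential. The
long-range potential enters only through `∂_r V₁` and `R² w³ V₁`, both bounded by multiples of the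
profile `m = a (1 + |x|)^{-γ-1}` once `a ≥ 1` and `γ ≤ 2`, which may be assumed. Since only `u` and
`∇u` are known to be square integrable, the integrations by parts use dilated cutoffs.

The right-hand side is controlled as follows.

* Potential terms: a dyadic decomposition gives `∫ m G ≤ K sup_R R⁻¹ ∫_{B(0,R)} G`, so that
  `∫ m |u| |∇u| = O(K/√τ) Q`, which is absorbed for large `τ`.
* Source terms: the duality of `X` and `X*`.
* The term `|ε| ∫ |u| |∇u|`: testing the equation with `ū` gives `|ε| ∫ |u|² ≤ A` and
  `∫ |∇u|² ≤ (τ + a) ∫ |u|² + A`, where `A = ∫ |f| |u| + ∫ m |u|²`. For `|ε| ≤ τ` the term is thus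
  `O(√τ A)`, and for `|ε| > τ` these two inequalities already bound `Q`.

The integrals over circles are bounded by the two `X` norms, by the fundamental theorem of calculus
for `r² |u|²` along rays.

Neither `f` nor `V₂` is assumed measurable. Both are replaced by the continuous function
`max (|f - V₂ u| - m |u|) 0 ≤ |f|`.
-/

noncomputable section
open MeasureTheory Metric Set ENNReal

abbrev Ed (d : ℕ) := EuclideanSpace ℝ (Fin d)

/-- partial derivative of a complex valued function -/
def pd {d : ℕ} (u : Ed d → ℂ) (i : Fin d) (x : Ed d) : ℂ :=
  fderiv ℝ u x (EuclideanSpace.single i 1)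

/-- Laplacian of a complex valued function -/
def lap {d : ℕ} (u : Ed d → ℂ) (x : Ed d) : ℂ :=
  ∑ i, fderiv ℝ (pd u i) x (EuclideanSpace.single i 1)

/-- squared norm of the gradient, as an extended nonnegative real -/
def gradSq {d : ℕ} (u : Ed d → ℂ) (x : Ed d) : ℝ≥0∞ :=
  ∑ i, (‖pd u i x‖₊ : ℝ≥0∞) ^ 2

/-- |u(x)|² as an extended nonnegative real -/
def usq {d : ℕ} (u : Ed d → ℂ) (x : Ed d) : ℝ≥0∞ := (‖u x‖₊ : ℝ≥0∞) ^ 2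

/-- radial derivative ∂_r V (x) = (x/|x|)·∇V(x) -/
def radialDeriv {d : ℕ} (V : Ed d → ℝ) (x : Ed d) : ℝ :=
  fderiv ℝ V x x / ‖x‖

/-- Morrey–Campanato type quantity sup_{R>0} (1/R) ∫_{B(0,R)} g -/
def nX2 {d : ℕ} (g : Ed d → ℝ≥0∞) : ℝ≥0∞ :=
  ⨆ (R : ℝ) (_ : 0 < R), (ENNReal.ofReal R)⁻¹ * ∫⁻ x in ball (0 : Ed d) R, g x

/-- dyadic shell C_j -/
def shell (d : ℕ) (j : ℤ) : Set (Ed d) := {x | (2:ℝ)^j < ‖x‖ ∧ ‖x‖ ≤ (2:ℝ)^(j+1)}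

/-- the dual norm ‖f‖_{X*} applied to g = |f|² -/
def nXstar {d : ℕ} (g : Ed d → ℝ≥0∞) : ℝ≥0∞ :=
  ∑' j : ℤ, (ENNReal.ofReal ((2:ℝ)^(j+1)) * ∫⁻ x in shell d j, g x) ^ (1/2 : ℝ)

/-- the index j₀ with 2^{j₀} < ρ ≤ 2^{j₀+1} -/
def jIdx (ρ : ℝ) : ℤ := ⌈Real.logb 2 ρ⌉ - 1

/-- sup_{R ≥ ρ} (1/R)∫_{B(0,R)} g -/
def nX2r {d : ℕ} (ρ : ℝ) (g : Ed d → ℝ≥0∞) : ℝ≥0∞ :=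
  ⨆ (R : ℝ) (_ : ρ ≤ R), (ENNReal.ofReal R)⁻¹ * ∫⁻ x in ball (0 : Ed d) R, g x

/-- the dual norm ‖f‖_{X*_ρ} applied to g = |f|² -/
def nXstarr {d : ℕ} (ρ : ℝ) (g : Ed d → ℝ≥0∞) : ℝ≥0∞ :=
  (∑' j : {j : ℤ // jIdx ρ ≤ j},
    (ENNReal.ofReal ((2:ℝ)^((j:ℤ)+1)) * ∫⁻ x in shell d (j:ℤ), g x) ^ (1/2 : ℝ))
  + (ENNReal.ofReal ρ * ∫⁻ x in ball (0 : Ed d) ρ, g x) ^ (1/2 : ℝ)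

/-- integral of g over the sphere of radius R w.r.t. (d-1)-dimensional Hausdorff measure -/
def sphInt {d : ℕ} (R : ℝ) (g : Ed d → ℝ≥0∞) : ℝ≥0∞ :=
  ∫⁻ x in Metric.sphere (0 : Ed d) R, g x ∂(μH[(d:ℝ) - 1])

/-! ### Integration by parts with cutoffs -/

section Cutoff

variable {E : Type*} [NormedAddCommGroup E] [NormedSpace ℝ E] [FiniteDimensional ℝ E]
  (χ : ContDiffBump (0 : E))

lemma continuous_bump_smul (c : ℝ) : Continuous fun x : E => χ (c • x) :=
  χ.continuous.comp (continuous_const_smul c)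

lemma hasCompactSupport_bump_smul {c : ℝ} (hc : c ≠ 0) :
    HasCompactSupport fun x : E => χ (c • x) :=
  χ.hasCompactSupport.comp_smul hc

lemma differentiable_bump : Differentiable ℝ (χ : E → ℝ) :=
  (χ.contDiff (n := 1)).differentiable one_ne_zero

lemma fderiv_bump_smul (c : ℝ) (x v : E) :
    fderiv ℝ (fun y => χ (c • y)) x v = c * fderiv ℝ χ (c • x) v := by
  rw [fderiv_comp_smul]
  rfl

lemma exists_abs_fderiv_bump_le (v : E) : ∃ M, ∀ x, |fderiv ℝ χ x v| ≤ M :=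
  (((χ.contDiff (n := 1)).continuous_fderiv one_ne_zero).clm_apply
    continuous_const).bounded_above_of_compact_support (χ.hasCompactSupport.fderiv_apply ℝ v)

lemma norm_bump_smul_mul_le (F : E → ℝ) (c : ℝ) (x : E) :
    ‖χ (c • x) * F x‖ ≤ ‖F x‖ := by
  rw [norm_mul, Real.norm_of_nonneg χ.nonneg]
  exact mul_le_of_le_one_left (norm_nonneg _) χ.le_one

variable [MeasurableSpace E] [BorelSpace E] {μ : Measure E} {F : E → ℝ} {c : ℕ → ℝ}

lemma tendsto_integral_bump_smul_mul (hclim : Filter.Tendsto c Filter.atTop (nhds 0))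
    (hFint : Integrable F μ) :
    Filter.Tendsto (fun n => ∫ x, χ (c n • x) * F x ∂μ) Filter.atTop (nhds (∫ x, F x ∂μ)) := by
  refine tendsto_integral_of_dominated_convergence (fun x => ‖F x‖)
    (fun n => (continuous_bump_smul χ _).aestronglyMeasurable.mul hFint.aestronglyMeasurable)
    hFint.norm (fun n => .of_forall fun x => norm_bump_smul_mul_le χ _ _ x) (.of_forall fun x => ?_)
  have hχ := (χ.continuous.tendsto _).comp (hclim.smul_const x)
  have hone : χ ((0 : ℝ) • x) = 1 := by
    rw [zero_smul]
    exact χ.one_of_mem_closedBall (mem_closedBall_self χ.rIn_pos.le)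
  rw [hone] at hχ
  simpa using! hχ.mul_const (F x)

variable [μ.IsAddHaarMeasure]

lemma integrable_bump_smul_mul {c : ℝ} (hc : c ≠ 0) (hF : Continuous F) :
    Integrable (fun x => χ (c • x) * F x) μ :=
  ((continuous_bump_smul χ c).mul hF).integrable_of_hasCompactSupport
    (hasCompactSupport_bump_smul χ hc).mul_right

/-- Moving the derivative onto the dilated cutoff gains a factor `c`. -/
lemma abs_integral_bump_smul_mul_fderiv_le {c M : ℝ} {v : E} (hc : 0 < c)
    (hF : ContDiff ℝ 1 F) (hFint : Integrable F μ) (hM : ∀ x, |fderiv ℝ χ x v| ≤ M) :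
    |∫ x, χ (c • x) * fderiv ℝ F x v ∂μ| ≤ c * (M * ∫ x, |F x| ∂μ) := by
  have hχ' : Continuous fun x : E => fderiv ℝ χ x v :=
    ((χ.contDiff (n := 1)).continuous_fderiv one_ne_zero).clm_apply continuous_const
  have hbound (x : E) : ‖fderiv ℝ (fun y => χ (c • y)) x v * F x‖ ≤ c * (M * |F x|) := by
    rw [fderiv_bump_smul, norm_mul, norm_mul, Real.norm_of_nonneg hc.le, mul_assoc]
    exact mul_le_mul_of_nonneg_left
      (mul_le_mul_of_nonneg_right (hM _) (norm_nonneg _)) hc.le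
  have hmajorant : Integrable (fun x => c * (M * |F x|)) μ :=
    (hFint.abs.const_mul M).const_mul c
  have hint : Integrable (fun x => fderiv ℝ (fun y => χ (c • y)) x v * F x) μ := by
    refine hmajorant.mono' ?_ (.of_forall hbound)
    simp only [fderiv_bump_smul]
    exact ((continuous_const.mul (hχ'.comp (continuous_const_smul c))).mul
      hF.continuous).aestronglyMeasurable
  rw [integral_mul_fderiv_eq_neg_fderiv_mul_of_integrable hint
    (integrable_bump_smul_mul χ hc.ne'
      ((hF.continuous_fderiv one_ne_zero).clm_apply continuous_const))
    (integrable_bump_smul_mul χ hc.ne' hF.continuous)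
    (fun x _ => (differentiable_bump χ _).comp x (differentiableAt_id.const_smul c))
    (fun x _ => hF.differentiable one_ne_zero x), abs_neg]
  calc |∫ x, fderiv ℝ (fun y => χ (c • y)) x v * F x ∂μ|
      ≤ ∫ x, c * (M * |F x|) ∂μ := norm_integral_le_of_norm_le hmajorant (.of_forall hbound)
    _ = c * (M * ∫ x, |F x| ∂μ) := by rw [integral_const_mul, integral_const_mul]

lemma tendsto_integral_bump_smul_mul_fderiv (hc : ∀ n, 0 < c n)
    (hclim : Filter.Tendsto c Filter.atTop (nhds 0)) (hF : ContDiff ℝ 1 F)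
    (hFint : Integrable F μ) (v : E) :
    Filter.Tendsto (fun n => ∫ x, χ (c n • x) * fderiv ℝ F x v ∂μ) Filter.atTop (nhds 0) := by
  obtain ⟨M, hM⟩ := exists_abs_fderiv_bump_le χ v
  refine squeeze_zero_norm
    (fun n => abs_integral_bump_smul_mul_fderiv_le χ (hc n) hF hFint hM) ?_
  simpa using hclim.mul_const (M * ∫ x, |F x| ∂μ)

end Cutoff

/-! ### The divergence of an integrable vector field -/

/-- The divergence `∑ᵢ ∂ᵢFᵢ` of a vector field on `ℝ^d`, given by its components. -/
def divergence {d : ℕ} (F : Fin d → Ed d → ℝ) (x : Ed d) : ℝ :=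
  ∑ i, fderiv ℝ (F i) x (EuclideanSpace.single i 1)

section Divergence

variable {d : ℕ}

/-- The divergence itself need not be integrable, hence no integral of it appears. -/
lemma integral_nonpos_of_le_divergence {F : Fin d → Ed d → ℝ} {φ : Ed d → ℝ}
    (hF : ∀ i, ContDiff ℝ 1 (F i)) (hFint : ∀ i, Integrable (F i))
    (hφ : Integrable φ) (hle : ∀ x, φ x ≤ divergence F x) :
    ∫ x, φ x ≤ 0 := by
  let χ : ContDiffBump (0 : Ed d) := ⟨1, 2, one_pos, one_lt_two⟩
  let c (n : ℕ) : ℝ := 1 / ((n : ℝ) + 1)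
  have hc (n : ℕ) : 0 < c n := by positivity
  have hclim : Filter.Tendsto c Filter.atTop (nhds 0) := tendsto_one_div_add_atTop_nhds_zero_nat
  have hint (n : ℕ) (i : Fin d) :
      Integrable fun x => χ (c n • x) * fderiv ℝ (F i) x (EuclideanSpace.single i 1) :=
    integrable_bump_smul_mul χ (hc n).ne'
      (((hF i).continuous_fderiv one_ne_zero).clm_apply continuous_const)
  have hdiv := tendsto_finsetSum Finset.univ fun i _ =>
    tendsto_integral_bump_smul_mul_fderiv χ hc hclim (hF i) (hFint i) (EuclideanSpace.single i 1)
  rw [Finset.sum_const_zero] at hdiv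
  refine le_of_tendsto_of_tendsto' (tendsto_integral_bump_smul_mul χ hclim hφ) hdiv
    fun n => ?_
  rw [← integral_finsetSum _ fun i _ => hint n i]
  refine integral_mono
    (hφ.mono ((continuous_bump_smul χ _).aestronglyMeasurable.mul hφ.aestronglyMeasurable)
      (.of_forall fun x => norm_bump_smul_mul_le χ _ _ x))
    (integrable_finsetSum _ fun i _ => hint n i) fun x => ?_
  rw [← Finset.mul_sum]
  exact mul_le_mul_of_nonneg_left (hle x) χ.nonneg

lemma fderiv_apply_eq_sum {G : Type*} [NormedAddCommGroup G] [NormedSpace ℝ G] (f : Ed d → G)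
    (x v : Ed d) : fderiv ℝ f x v = ∑ i, v i • fderiv ℝ f x (EuclideanSpace.single i 1) := by
  conv_lhs => rw [← (EuclideanSpace.basisFun (Fin d) ℝ).sum_repr v]
  simp only [map_sum, map_smul, EuclideanSpace.basisFun_repr, EuclideanSpace.basisFun_apply]

lemma divergence_add {F G : Fin d → Ed d → ℝ} {x : Ed d}
    (hF : ∀ i, DifferentiableAt ℝ (F i) x) (hG : ∀ i, DifferentiableAt ℝ (G i) x) :
    divergence (fun i y => F i y + G i y) x = divergence F x + divergence G x := by
  simp only [divergence, ← Finset.sum_add_distrib]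
  refine Finset.sum_congr rfl fun i _ => ?_
  rw [fderiv_fun_add (hF i) (hG i)]
  rfl

lemma hasFDerivAt_coord (i : Fin d) (x : Ed d) :
    HasFDerivAt (fun y : Ed d => y i) (EuclideanSpace.proj i : Ed d →L[ℝ] ℝ) x :=
  (EuclideanSpace.proj i : Ed d →L[ℝ] ℝ).hasFDerivAt

lemma divergence_mul_coord {ψ : Ed d → ℝ} {x : Ed d} (hψ : DifferentiableAt ℝ ψ x) :
    divergence (fun i y => ψ y * y i) x = d * ψ x + fderiv ℝ ψ x x := by
  have hterm (i : Fin d) : fderiv ℝ (fun y : Ed d => ψ y * y i) x (EuclideanSpace.single i 1) =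
      ψ x + x i * fderiv ℝ ψ x (EuclideanSpace.single i 1) := by
    rw [(hψ.hasFDerivAt.fun_mul (hasFDerivAt_coord i x)).fderiv]
    simp
  simp only [divergence, hterm, Finset.sum_add_distrib]
  rw [fderiv_apply_eq_sum ψ x x]
  simp

end Divergence

/-! ### Euler's operator and the Morawetz weight -/

/-- Euler's operator `x · ∇`, that is, the derivative in the direction of the position vector. -/
def euler {E G : Type*} [NormedAddCommGroup E] [NormedSpace ℝ E] [NormedAddCommGroup G]
    [NormedSpace ℝ G] (f : E → G) (x : E) : G :=
  fderiv ℝ f x x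

section Euler

variable {E G : Type*} [NormedAddCommGroup E] [NormedSpace ℝ E] [NormedAddCommGroup G]
  [NormedSpace ℝ G]

lemma contDiff_fderiv_apply {u : E → G} (hu : ContDiff ℝ 2 u) (v : E) :
    ContDiff ℝ 1 fun x => fderiv ℝ u x v :=
  (hu.fderiv_right (by norm_num)).clm_apply contDiff_const

lemma contDiff_euler {u : E → G} (hu : ContDiff ℝ 2 u) : ContDiff ℝ 1 (euler u) :=
  (hu.fderiv_right (by norm_num)).clm_apply contDiff_id

lemma fderiv_euler_apply {u : E → G} (hu : ContDiff ℝ 2 u) (x v : E) :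
    fderiv ℝ (euler u) x v = fderiv ℝ u x v + euler (fun y => fderiv ℝ u y v) x := by
  have hdu : DifferentiableAt ℝ (fderiv ℝ u) x :=
    (hu.fderiv_right (m := 1) (by norm_num)).differentiable one_ne_zero x
  have hsymm := (hu.contDiffAt.isSymmSndFDerivAt (x := x) (by simp)).eq v x
  have hleft := (hdu.hasFDerivAt.clm_apply (hasFDerivAt_id x)).fderiv
  have hright := (hdu.hasFDerivAt.clm_apply (hasFDerivAt_const v x)).fderiv
  unfold euler
  simp only [id] at hleft
  rw [hleft, hright]
  simp [hsymm]

lemma euler_sub {f g : E → G} {x : E} (hf : DifferentiableAt ℝ f x)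
    (hg : DifferentiableAt ℝ g x) : euler (fun y => f y - g y) x = euler f x - euler g x := by
  unfold euler
  rw [fderiv_fun_sub hf hg, sub_apply]

lemma euler_const_mul {φ : E → ℝ} {x : E} (hφ : DifferentiableAt ℝ φ x) (c : ℝ) :
    euler (fun y => c * φ y) x = c * euler φ x := by
  unfold euler
  rw [fderiv_const_mul hφ c, smul_apply, smul_eq_mul]

lemma euler_mul {φ ψ : E → ℝ} {x : E} (hφ : DifferentiableAt ℝ φ x)
    (hψ : DifferentiableAt ℝ ψ x) :
    euler (fun y => φ y * ψ y) x = φ x * euler ψ x + ψ x * euler φ x := by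
  unfold euler
  rw [fderiv_fun_mul hφ hψ, add_apply, smul_apply, smul_apply, smul_eq_mul, smul_eq_mul]

lemma euler_pow {φ : E → ℝ} {x : E} (hφ : DifferentiableAt ℝ φ x) (n : ℕ) :
    euler (fun y => φ y ^ n) x = n * φ x ^ (n - 1) * euler φ x := by
  unfold euler
  rw [fderiv_fun_pow n hφ, smul_apply, smul_eq_mul, nsmul_eq_mul]

lemma euler_norm_sq {H : Type*} [NormedAddCommGroup H] [InnerProductSpace ℝ H] {f : E → H}
    {x : E} (hf : DifferentiableAt ℝ f x) :
    euler (fun y => ‖f y‖ ^ 2) x = 2 * inner ℝ (f x) (euler f x) := by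
  rw [euler, hf.hasFDerivAt.norm_sq.fderiv]
  simp [euler]

end Euler

/-- The Morawetz weight `(R² + |x|²)^{-1/2}`. -/
def morawetzWeight {E : Type*} [NormedAddCommGroup E] (R : ℝ) (x : E) : ℝ :=
  (√(R ^ 2 + ‖x‖ ^ 2))⁻¹

section MorawetzWeight

variable {E : Type*} [NormedAddCommGroup E] {R : ℝ}

lemma morawetzWeight_pos (hR : 0 < R) (x : E) : 0 < morawetzWeight R x := by
  unfold morawetzWeight
  positivity

lemma morawetzWeight_sq_mul (hR : 0 < R) (x : E) :
    morawetzWeight R x ^ 2 * (R ^ 2 + ‖x‖ ^ 2) = 1 := by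
  rw [morawetzWeight, inv_pow, Real.sq_sqrt (by positivity)]
  exact inv_mul_cancel₀ (by positivity)

lemma sq_mul_morawetzWeight_pow_three (hR : 0 < R) (x : E) :
    R ^ 2 * morawetzWeight R x ^ 3 =
      morawetzWeight R x - ‖x‖ ^ 2 * morawetzWeight R x ^ 3 := by
  linear_combination morawetzWeight R x * morawetzWeight_sq_mul hR x

lemma morawetzWeight_mul_norm_le_one (hR : 0 < R) (x : E) :
    morawetzWeight R x * ‖x‖ ≤ 1 := by
  rw [morawetzWeight, inv_mul_le_one₀ (by positivity)]
  exact Real.le_sqrt_of_sq_le (by nlinarith)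

lemma morawetzWeight_mul_one_add_norm_le (hR : 1 ≤ R) (x : E) :
    morawetzWeight R x * (1 + ‖x‖) ≤ 3 / 2 := by
  rw [morawetzWeight, inv_mul_le_iff₀ (by positivity)]
  refine le_of_sq_le_sq ?_ (by positivity)
  rw [mul_pow, Real.sq_sqrt (by positivity)]
  nlinarith [sq_nonneg (‖x‖ - 1)]

lemma morawetzWeight_le_one (hR : 1 ≤ R) (x : E) : morawetzWeight R x ≤ 1 := by
  refine inv_le_one_of_one_le₀ (Real.one_le_sqrt.2 ?_)
  nlinarith [sq_nonneg ‖x‖]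

lemma inv_three_mul_le_sq_mul_morawetzWeight_pow_three (hR : 0 < R) {x : E} (hx : ‖x‖ ≤ R) :
    (3 * R)⁻¹ ≤ R ^ 2 * morawetzWeight R x ^ 3 := by
  have hpos := morawetzWeight_pos hR x
  have hsq : 1 / 2 ≤ (R * morawetzWeight R x) ^ 2 := by
    have hle : ‖x‖ ^ 2 ≤ R ^ 2 := by gcongr
    nlinarith [morawetzWeight_sq_mul hR x, sq_nonneg (morawetzWeight R x)]
  have hle : 2 / 3 ≤ R * morawetzWeight R x :=
    le_of_sq_le_sq (by linarith) (by positivity)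
  rw [inv_le_iff_one_le_mul₀ (by positivity)]
  nlinarith

variable [InnerProductSpace ℝ E]

lemma contDiff_morawetzWeight {n : WithTop ℕ∞} (hR : 0 < R) :
    ContDiff ℝ n (morawetzWeight R : E → ℝ) := by
  refine ContDiff.inv (ContDiff.sqrt (contDiff_const.add (contDiff_norm_sq ℝ)) ?_) ?_ <;>
    intro x <;> positivity

lemma differentiable_morawetzWeight (hR : 0 < R) :
    Differentiable ℝ (morawetzWeight R : E → ℝ) :=
  (contDiff_morawetzWeight (n := 1) hR).differentiable one_ne_zero

lemma fderiv_morawetzWeight_apply (hR : 0 < R) (x v : E) :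
    fderiv ℝ (morawetzWeight R) x v = -(inner ℝ x v * morawetzWeight R x ^ 3) := by
  have hpos : 0 < R ^ 2 + ‖x‖ ^ 2 := by positivity
  have hsq : HasFDerivAt (fun y : E => R ^ 2 + ‖y‖ ^ 2) (2 • innerSL ℝ x) x :=
    (hasStrictFDerivAt_norm_sq x).hasFDerivAt.const_add _
  have hs : √(R ^ 2 + ‖x‖ ^ 2) ≠ 0 := (Real.sqrt_pos.2 hpos).ne'
  have hw := (hasDerivAt_inv hs).comp_hasFDerivAt x (hsq.sqrt hpos.ne')
  rw [show morawetzWeight R = Inv.inv ∘ fun y : E => √(R ^ 2 + ‖y‖ ^ 2) from rfl, hw.fderiv]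
  simp only [one_div, mul_inv_rev, neg_smul, neg_apply, smul_apply, coe_innerSL_apply, nsmul_eq_mul,
    Nat.cast_ofNat, smul_eq_mul, Function.comp_apply, inv_pow, neg_inj]
  field_simp

lemma euler_morawetzWeight (hR : 0 < R) (x : E) :
    euler (morawetzWeight R) x = -(‖x‖ ^ 2 * morawetzWeight R x ^ 3) := by
  rw [euler, fderiv_morawetzWeight_apply hR, real_inner_self_eq_norm_sq]

end MorawetzWeight

/-! ### The multiplier identity -/

/-- The Euclidean norm of the gradient of a complex valued function. -/
def gradNorm {d : ℕ} (u : Ed d → ℂ) (x : Ed d) : ℝ :=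
  √(∑ i, ‖pd u i x‖ ^ 2)

/-- The multiplier `w (x · ∇u + c u)` with the Morawetz weight `w` and `c = (d - 1) / 2`. -/
def morawetzMultiplier {d : ℕ} (R : ℝ) (u : Ed d → ℂ) (x : Ed d) : ℂ :=
  morawetzWeight R x • (euler u x + (((d : ℝ) - 1) / 2) • u x)

/-- The radial part `ψ` of the flux `⟨∂ᵢu, w (x · ∇u + c u)⟩ + ψ xᵢ` of the multiplier identity
for the operator `-Δ + W`. -/
def morawetzRadialFlux {d : ℕ} (R : ℝ) (W : Ed d → ℝ) (u : Ed d → ℂ) (x : Ed d) : ℝ :=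
  2⁻¹ * (((d : ℝ) - 1) / 2 * (morawetzWeight R x ^ 3 * ‖u x‖ ^ 2)
    - morawetzWeight R x * gradNorm u x ^ 2 - W x * (morawetzWeight R x * ‖u x‖ ^ 2))

/-- The flux of the multiplier identity for the operator `-Δ + W`. -/
def morawetzFlux {d : ℕ} (R : ℝ) (W : Ed d → ℝ) (u : Ed d → ℂ) (i : Fin d) (x : Ed d) : ℝ :=
  inner ℝ (pd u i x) (morawetzMultiplier R u x) + morawetzRadialFlux R W u x * x i

section MultiplierIdentity

variable {d : ℕ} {u v : Ed d → ℂ} {R : ℝ}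

lemma contDiff_pd (hu : ContDiff ℝ 2 u) (i : Fin d) : ContDiff ℝ 1 (pd u i) :=
  contDiff_fderiv_apply hu _

lemma gradNorm_nonneg (u : Ed d → ℂ) (x : Ed d) : 0 ≤ gradNorm u x :=
  Real.sqrt_nonneg _

lemma gradNorm_sq (u : Ed d → ℂ) (x : Ed d) : gradNorm u x ^ 2 = ∑ i, ‖pd u i x‖ ^ 2 :=
  Real.sq_sqrt (by positivity)

lemma norm_pd_le_gradNorm (u : Ed d → ℂ) (i : Fin d) (x : Ed d) :
    ‖pd u i x‖ ≤ gradNorm u x :=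
  Real.le_sqrt_of_sq_le <|
    Finset.single_le_sum (f := fun j => ‖pd u j x‖ ^ 2) (fun _ _ => sq_nonneg _)
      (Finset.mem_univ i)

lemma contDiff_gradNorm_sq (hu : ContDiff ℝ 2 u) : ContDiff ℝ 1 fun x => gradNorm u x ^ 2 := by
  simp only [gradNorm_sq]
  exact ContDiff.sum fun i _ => (contDiff_pd hu i).norm_sq ℝ

lemma norm_fderiv_apply_le_mul_gradNorm (u : Ed d → ℂ) (x v : Ed d) :
    ‖fderiv ℝ u x v‖ ≤ ‖v‖ * gradNorm u x := by
  calc ‖fderiv ℝ u x v‖ ≤ ∑ i, ‖v i‖ * ‖pd u i x‖ := by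
        rw [fderiv_apply_eq_sum]
        exact norm_sum_le_of_le _ fun i _ => norm_smul_le _ _
    _ ≤ √(∑ i, ‖v i‖ ^ 2) * √(∑ i, ‖pd u i x‖ ^ 2) := Real.sum_mul_le_sqrt_mul_sqrt _ _ _
    _ = ‖v‖ * gradNorm u x := by rw [EuclideanSpace.norm_eq, gradNorm]

lemma divergence_inner_pd (hu : ContDiff ℝ 2 u) {x : Ed d} (hv : DifferentiableAt ℝ v x) :
    divergence (fun i y => inner ℝ (pd u i y) (v y)) x =
      inner ℝ (lap u x) (v x) + ∑ i, inner ℝ (pd u i x) (pd v i x) := by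
  rw [lap, sum_inner, ← Finset.sum_add_distrib]
  refine Finset.sum_congr rfl fun i _ => ?_
  rw [fderiv_inner_apply ℝ ((contDiff_pd hu i).differentiable one_ne_zero x) hv, add_comm]
  rfl

lemma euler_gradNorm_sq (hu : ContDiff ℝ 2 u) (x : Ed d) :
    euler (fun y => gradNorm u y ^ 2) x = 2 * ∑ i, inner ℝ (pd u i x) (euler (pd u i) x) := by
  have hdiff (i : Fin d) : DifferentiableAt ℝ (pd u i) x :=
    (contDiff_pd hu i).differentiable one_ne_zero x
  simp only [gradNorm_sq, Finset.mul_sum]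
  rw [euler, fderiv_fun_sum fun i _ => (hdiff i).norm_sq ℝ, sum_apply]
  exact Finset.sum_congr rfl fun i _ => euler_norm_sq (hdiff i)

lemma sum_inner_pd_euler (hu : ContDiff ℝ 2 u) (x : Ed d) :
    ∑ i, inner ℝ (pd u i x) (pd (euler u) i x) =
      gradNorm u x ^ 2 + euler (fun y => gradNorm u y ^ 2) x / 2 := by
  rw [euler_gradNorm_sq hu, mul_div_cancel_left₀ _ two_ne_zero, gradNorm_sq,
    ← Finset.sum_add_distrib]
  refine Finset.sum_congr rfl fun i _ => ?_
  have hcomm : pd (euler u) i x = pd u i x + euler (pd u i) x := fderiv_euler_apply hu x _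
  rw [hcomm, inner_add_right, real_inner_self_eq_norm_sq]

lemma contDiff_morawetzMultiplier (hR : 0 < R) (hu : ContDiff ℝ 2 u) :
    ContDiff ℝ 1 (morawetzMultiplier R u) :=
  (contDiff_morawetzWeight hR).smul
    ((contDiff_euler hu).add ((hu.of_le one_le_two).const_smul _))

lemma pd_morawetzMultiplier (hR : 0 < R) (hu : ContDiff ℝ 2 u) (x : Ed d) (i : Fin d) :
    pd (morawetzMultiplier R u) i x =
      morawetzWeight R x • (pd (euler u) i x + (((d : ℝ) - 1) / 2) • pd u i x)
        - (x i * morawetzWeight R x ^ 3) • (euler u x + (((d : ℝ) - 1) / 2) • u x) := by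
  have hu' : DifferentiableAt ℝ u x := hu.differentiable two_ne_zero x
  have hX : DifferentiableAt ℝ (euler u) x := (contDiff_euler hu).differentiable one_ne_zero x
  have h := ((differentiable_morawetzWeight hR x).hasFDerivAt.fun_smul
    (hX.hasFDerivAt.fun_add (hu'.hasFDerivAt.fun_const_smul (((d : ℝ) - 1) / 2)))).fderiv
  have hw := fderiv_morawetzWeight_apply hR x (EuclideanSpace.single i 1)
  rw [EuclideanSpace.inner_single_right] at hw
  rw [pd, show fderiv ℝ (morawetzMultiplier R u) x = _ from h]
  simp only [add_apply, smul_apply, ContinuousLinearMap.smulRight_apply, hw, neg_smul,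
    ← sub_eq_add_neg, one_mul, conj_trivial]
  rfl

lemma sum_inner_pd_morawetzMultiplier (hR : 0 < R) (hu : ContDiff ℝ 2 u) (x : Ed d) :
    ∑ i, inner ℝ (pd u i x) (pd (morawetzMultiplier R u) i x) =
      morawetzWeight R x * ((d + 1) / 2 * gradNorm u x ^ 2
          + euler (fun y => gradNorm u y ^ 2) x / 2)
        - morawetzWeight R x ^ 3 *
          (‖euler u x‖ ^ 2 + ((d : ℝ) - 1) / 2 * inner ℝ (u x) (euler u x)) := by
  have hXu : euler u x = ∑ i, x i • pd u i x := fderiv_apply_eq_sum u x x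
  have hsum (z : ℂ) : ∑ i, x i * inner ℝ (pd u i x) z = inner ℝ (euler u x) z := by
    simp only [hXu, sum_inner, real_inner_smul_left]
  have hgrad : ∑ i, inner ℝ (pd u i x) (pd u i x) = gradNorm u x ^ 2 := by
    simp only [gradNorm_sq, real_inner_self_eq_norm_sq]
  have hterm (i : Fin d) : inner ℝ (pd u i x) (pd (morawetzMultiplier R u) i x) =
      morawetzWeight R x * (inner ℝ (pd u i x) (pd (euler u) i x)
          + ((d : ℝ) - 1) / 2 * inner ℝ (pd u i x) (pd u i x))
        - morawetzWeight R x ^ 3 * (x i * inner ℝ (pd u i x)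
          (euler u x + (((d : ℝ) - 1) / 2) • u x)) := by
    rw [pd_morawetzMultiplier hR hu, inner_sub_right, real_inner_smul_right, inner_add_right,
      real_inner_smul_right, real_inner_smul_right]
    ring
  simp only [hterm, Finset.sum_sub_distrib, ← Finset.mul_sum, Finset.sum_add_distrib, hsum,
    hgrad, sum_inner_pd_euler hu]
  rw [inner_add_right, real_inner_smul_right, real_inner_self_eq_norm_sq, real_inner_comm]
  ring

variable {W : Ed d → ℝ}

lemma contDiff_morawetzRadialFlux (hR : 0 < R) (hu : ContDiff ℝ 2 u) (hW : ContDiff ℝ 1 W) :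
    ContDiff ℝ 1 (morawetzRadialFlux R W u) := by
  have hw : ContDiff ℝ 1 (morawetzWeight R : Ed d → ℝ) := contDiff_morawetzWeight hR
  have husq : ContDiff ℝ 1 fun x => ‖u x‖ ^ 2 := (hu.of_le one_le_two).norm_sq ℝ
  exact contDiff_const.mul (((contDiff_const.mul ((hw.pow 3).mul husq)).sub
    (hw.mul (contDiff_gradNorm_sq hu))).sub (hW.mul (hw.mul husq)))

lemma contDiff_morawetzFlux (hR : 0 < R) (hu : ContDiff ℝ 2 u) (hW : ContDiff ℝ 1 W)
    (i : Fin d) : ContDiff ℝ 1 (morawetzFlux R W u i) :=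
  ((contDiff_pd hu i).inner ℝ (contDiff_morawetzMultiplier hR hu)).add
    ((contDiff_morawetzRadialFlux hR hu hW).mul
      (EuclideanSpace.proj i : Ed d →L[ℝ] ℝ).contDiff)

lemma euler_morawetzRadialFlux (hR : 0 < R) (hu : ContDiff ℝ 2 u) (hW : ContDiff ℝ 1 W)
    (x : Ed d) :
    euler (morawetzRadialFlux R W u) x =
      (((d : ℝ) - 1) / 2 * (2 * morawetzWeight R x ^ 3 * inner ℝ (u x) (euler u x)
          - 3 * ‖x‖ ^ 2 * morawetzWeight R x ^ 5 * ‖u x‖ ^ 2)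
        - morawetzWeight R x * euler (fun y => gradNorm u y ^ 2) x
        + ‖x‖ ^ 2 * morawetzWeight R x ^ 3 * gradNorm u x ^ 2
        - W x * (2 * morawetzWeight R x * inner ℝ (u x) (euler u x)
          - ‖x‖ ^ 2 * morawetzWeight R x ^ 3 * ‖u x‖ ^ 2)
        - euler W x * (morawetzWeight R x * ‖u x‖ ^ 2)) / 2 := by
  have hu' : DifferentiableAt ℝ u x := hu.differentiable two_ne_zero x
  have hw : DifferentiableAt ℝ (morawetzWeight R) x := differentiable_morawetzWeight hR x
  have hg : DifferentiableAt ℝ (fun y => gradNorm u y ^ 2) x :=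
    (contDiff_gradNorm_sq hu).differentiable one_ne_zero x
  have hW' : DifferentiableAt ℝ W x := hW.differentiable one_ne_zero x
  have husq : DifferentiableAt ℝ (fun y => ‖u y‖ ^ 2) x := hu'.norm_sq ℝ
  have hflux := hw.fun_pow 3 |>.fun_mul husq
  unfold morawetzRadialFlux
  rw [euler_const_mul (((hflux.const_mul _).fun_sub (hw.fun_mul hg)).fun_sub
      (hW'.fun_mul (hw.fun_mul husq))),
    euler_sub ((hflux.const_mul _).fun_sub (hw.fun_mul hg)) (hW'.fun_mul (hw.fun_mul husq)),
    euler_sub (hflux.const_mul _) (hw.fun_mul hg), euler_const_mul hflux,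
    euler_mul (hw.fun_pow 3) husq, euler_mul hw hg, euler_mul hW' (hw.fun_mul husq),
    euler_mul hw husq, euler_pow hw, euler_morawetzWeight hR, euler_norm_sq hu']
  push_cast
  ring

theorem divergence_morawetzFlux (hR : 0 < R) (hu : ContDiff ℝ 2 u) (hW : ContDiff ℝ 1 W)
    (x : Ed d) :
    divergence (morawetzFlux R W u) x =
      inner ℝ (lap u x - W x • u x) (morawetzMultiplier R u x)
        + (morawetzWeight R x + ‖x‖ ^ 2 * morawetzWeight R x ^ 3) / 2 * gradNorm u x ^ 2
        - morawetzWeight R x ^ 3 * ‖euler u x‖ ^ 2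
        + ((d : ℝ) - 1) / 4 * (d * morawetzWeight R x ^ 3
          - 3 * ‖x‖ ^ 2 * morawetzWeight R x ^ 5) * ‖u x‖ ^ 2
        - morawetzWeight R x * euler W x * ‖u x‖ ^ 2 / 2
        - R ^ 2 * morawetzWeight R x ^ 3 * W x * ‖u x‖ ^ 2 / 2 := by
  have hv := (contDiff_morawetzMultiplier hR hu).differentiable one_ne_zero
  have hψ := (contDiff_morawetzRadialFlux hR hu hW).differentiable one_ne_zero
  have hsplit := divergence_add (x := x)
    (fun i => ((contDiff_pd hu i).differentiable one_ne_zero x).inner ℝ (hv x))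
    (fun i => (hψ x).fun_mul (hasFDerivAt_coord i x).differentiableAt)
  have hmult : inner ℝ (u x) (morawetzMultiplier R u x) =
      morawetzWeight R x * (inner ℝ (u x) (euler u x) + ((d : ℝ) - 1) / 2 * ‖u x‖ ^ 2) := by
    rw [morawetzMultiplier, real_inner_smul_right, inner_add_right, real_inner_smul_right,
      real_inner_self_eq_norm_sq]
  change divergence (fun i y => _) x = _
  refine hsplit.trans ?_
  rw [divergence_inner_pd hu (hv x), divergence_mul_coord (hψ x),
    sum_inner_pd_morawetzMultiplier hR hu]
  change _ + (_ + euler (morawetzRadialFlux R W u) x) = _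
  rw [euler_morawetzRadialFlux hR hu hW, inner_sub_left, real_inner_smul_left, hmult,
    sq_mul_morawetzWeight_pow_three hR, morawetzRadialFlux]
  ring

end MultiplierIdentity

/-! ### Pointwise Morawetz estimate -/

/-- The profile `a (1 + |x|)^{-γ-1}` of a short range potential. -/
def decayProfile {d : ℕ} (a γ : ℝ) (x : Ed d) : ℝ :=
  a * (1 + ‖x‖) ^ (-γ - 1)

/-- A long range potential: it decays like `|x|^{-γ}`, and its radial derivative is bounded above by
the short range profile. -/
structure IsLongRange {d : ℕ} (a γ : ℝ) (V : Ed d → ℝ) : Prop where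
  contDiff : ContDiff ℝ 1 V
  abs_le : ∀ x, |V x| ≤ a * (1 + ‖x‖) ^ (-γ)
  radialDeriv_le : ∀ x, radialDeriv V x ≤ decayProfile a γ x

section Profile

variable {d : ℕ} {a γ R : ℝ} {V : Ed d → ℝ}

lemma decayProfile_nonneg (ha : 0 ≤ a) (x : Ed d) : 0 ≤ decayProfile a γ x := by
  unfold decayProfile
  positivity

lemma continuous_decayProfile : Continuous (decayProfile a γ : Ed d → ℝ) :=
  continuous_const.mul ((continuous_const.add continuous_norm).rpow_const
    fun x => .inl (by positivity : 1 + ‖x‖ ≠ 0))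

lemma one_add_norm_mul_decayProfile (x : Ed d) :
    (1 + ‖x‖) * decayProfile a γ x = a * (1 + ‖x‖) ^ (-γ) := by
  have h := Real.rpow_add_one (x := 1 + ‖x‖) (by positivity) (-γ - 1)
  rw [sub_add_cancel] at h
  rw [decayProfile, h]
  ring

lemma mul_one_add_norm_rpow_le (ha : 0 ≤ a) {s : ℝ} (hs : s ≤ 0) (x : Ed d) :
    a * (1 + ‖x‖) ^ s ≤ a :=
  mul_le_of_le_one_right ha (Real.rpow_le_one_of_one_le_of_nonpos (by simp) hs)

lemma decayProfile_le (ha : 0 ≤ a) (hγ : 0 ≤ γ) (x : Ed d) : decayProfile a γ x ≤ a :=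
  mul_one_add_norm_rpow_le ha (by linarith) x

lemma morawetzWeight_pow_three_le_four_mul_decayProfile (ha : 1 ≤ a) (hγ : γ ≤ 2) (hR : 1 ≤ R)
    (x : Ed d) : morawetzWeight R x ^ 3 ≤ 4 * decayProfile a γ x := by
  have hw := (morawetzWeight_pos (zero_lt_one.trans_le hR) x).le
  have hone : (1 : ℝ) ≤ 1 + ‖x‖ := by simp
  have hcube : (morawetzWeight R x * (1 + ‖x‖)) ^ 3 ≤ 4 :=
    (pow_le_pow_left₀ (by positivity) (morawetzWeight_mul_one_add_norm_le hR x) 3).trans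
      (by norm_num)
  have hinv : (1 + ‖x‖) ^ (-3 : ℝ) ≤ decayProfile a γ x :=
    (Real.rpow_le_rpow_of_exponent_le hone (by linarith)).trans
      (le_mul_of_one_le_left (by positivity) ha)
  calc morawetzWeight R x ^ 3
      = (morawetzWeight R x * (1 + ‖x‖)) ^ 3 * (1 + ‖x‖) ^ (-3 : ℝ) := by
        rw [Real.rpow_neg (by positivity), Real.rpow_ofNat, mul_pow,
          mul_inv_cancel_right₀ (by positivity)]
    _ ≤ 4 * decayProfile a γ x := by gcongr

lemma sq_mul_morawetzWeight_pow_three_mul_abs_le (hV : IsLongRange a γ V) (ha : 0 ≤ a)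
    (hR : 1 ≤ R) (x : Ed d) :
    R ^ 2 * morawetzWeight R x ^ 3 * |V x| ≤ 3 / 2 * decayProfile a γ x := by
  have hR₀ : 0 < R := zero_lt_one.trans_le hR
  have hw := (morawetzWeight_pos hR₀ x).le
  have hle : R ^ 2 * morawetzWeight R x ^ 3 ≤ morawetzWeight R x := by
    rw [sq_mul_morawetzWeight_pow_three hR₀]
    exact sub_le_self _ (by positivity)
  calc R ^ 2 * morawetzWeight R x ^ 3 * |V x|
      ≤ morawetzWeight R x * ((1 + ‖x‖) * decayProfile a γ x) := by
        rw [one_add_norm_mul_decayProfile]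
        exact mul_le_mul hle (hV.abs_le x) (abs_nonneg _) hw
    _ = morawetzWeight R x * (1 + ‖x‖) * decayProfile a γ x := by ring
    _ ≤ 3 / 2 * decayProfile a γ x :=
        mul_le_mul_of_nonneg_right (morawetzWeight_mul_one_add_norm_le hR x)
          (decayProfile_nonneg ha x)

lemma norm_mul_radialDeriv (V : Ed d → ℝ) (x : Ed d) : ‖x‖ * radialDeriv V x = euler V x := by
  rcases eq_or_ne x 0 with rfl | hx
  · simp [euler]
  · exact mul_div_cancel₀ _ (norm_ne_zero_iff.2 hx)

lemma morawetzWeight_mul_euler_le (hV : IsLongRange a γ V) (ha : 0 ≤ a) (hR : 0 < R)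
    (x : Ed d) : morawetzWeight R x * euler V x ≤ decayProfile a γ x := by
  have hw := (morawetzWeight_pos hR x).le
  calc morawetzWeight R x * euler V x = morawetzWeight R x * ‖x‖ * radialDeriv V x := by
        rw [mul_assoc, norm_mul_radialDeriv]
    _ ≤ morawetzWeight R x * ‖x‖ * decayProfile a γ x :=
        mul_le_mul_of_nonneg_left (hV.radialDeriv_le x) (by positivity)
    _ ≤ decayProfile a γ x :=
        mul_le_of_le_one_left (decayProfile_nonneg ha x) (morawetzWeight_mul_norm_le_one hR x)

end Profile

section PointwiseMorawetz

variable {d : ℕ} {a γ R : ℝ} {V W : Ed d → ℝ} {u : Ed d → ℂ}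

lemma morawetzWeight_mul_norm_euler_le (hR : 0 < R) (u : Ed d → ℂ) (x : Ed d) :
    morawetzWeight R x * ‖euler u x‖ ≤ gradNorm u x := by
  calc morawetzWeight R x * ‖euler u x‖ ≤ morawetzWeight R x * (‖x‖ * gradNorm u x) :=
        mul_le_mul_of_nonneg_left (norm_fderiv_apply_le_mul_gradNorm u x x)
          (morawetzWeight_pos hR x).le
    _ ≤ gradNorm u x := by
        rw [← mul_assoc]
        exact mul_le_of_le_one_left (gradNorm_nonneg u x) (morawetzWeight_mul_norm_le_one hR x)

lemma norm_morawetzMultiplier_le (hd : 1 ≤ d) (hR : 1 ≤ R) (u : Ed d → ℂ) (x : Ed d) :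
    ‖morawetzMultiplier R u x‖ ≤ gradNorm u x + ((d : ℝ) - 1) / 2 * ‖u x‖ := by
  have hc : 0 ≤ ((d : ℝ) - 1) / 2 := by
    have : (1 : ℝ) ≤ d := mod_cast hd
    linarith
  have hw := morawetzWeight_pos (zero_lt_one.trans_le hR) x
  rw [morawetzMultiplier, norm_smul, Real.norm_of_nonneg hw.le]
  calc morawetzWeight R x * ‖euler u x + (((d : ℝ) - 1) / 2) • u x‖
      ≤ morawetzWeight R x * (‖euler u x‖ + ((d : ℝ) - 1) / 2 * ‖u x‖) := by
        gcongr
        exact (norm_add_le _ _).trans_eq (by rw [norm_smul, Real.norm_of_nonneg hc])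
    _ = morawetzWeight R x * ‖euler u x‖ + morawetzWeight R x * (((d : ℝ) - 1) / 2 * ‖u x‖) :=
        mul_add _ _ _
    _ ≤ gradNorm u x + ((d : ℝ) - 1) / 2 * ‖u x‖ :=
        add_le_add (morawetzWeight_mul_norm_euler_le (zero_lt_one.trans_le hR) u x)
          (mul_le_of_le_one_left (by positivity) (morawetzWeight_le_one hR x))

/-- The contribution of the dissipative term is a flux of mass: `⟨iu, u⟩ = 0` removes the zeroth
order part of the multiplier. -/
lemma abs_inner_I_mul_morawetzMultiplier_le (hR : 0 < R) (u : Ed d → ℂ) (x : Ed d) :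
    |inner ℝ (Complex.I * u x) (morawetzMultiplier R u x)| ≤ ‖u x‖ * gradNorm u x := by
  have horth : inner ℝ (Complex.I * u x) (u x) = (0 : ℝ) := by
    simp [Complex.inner, mul_comm]
  rw [morawetzMultiplier, real_inner_smul_right, inner_add_right, real_inner_smul_right, horth,
    mul_zero, add_zero, abs_mul, abs_of_pos (morawetzWeight_pos hR x)]
  calc morawetzWeight R x * |inner ℝ (Complex.I * u x) (euler u x)|
      ≤ morawetzWeight R x * (‖u x‖ * ‖euler u x‖) := by
        gcongr
        · exact (morawetzWeight_pos hR x).le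
        · exact (abs_real_inner_le_norm _ _).trans_eq (by simp)
    _ = ‖u x‖ * (morawetzWeight R x * ‖euler u x‖) := by ring
    _ ≤ ‖u x‖ * gradNorm u x := by
        gcongr
        exact morawetzWeight_mul_norm_euler_le hR u x

/-- The zeroth order term has no sign in dimension two, but it is always short range. -/
lemma neg_decayProfile_le_morawetz_zeroth_order (hd : 1 ≤ d) (ha : 1 ≤ a) (hγ : γ ≤ 2)
    (hR : 1 ≤ R) (x : Ed d) :
    -decayProfile a γ x ≤ ((d : ℝ) - 1) / 4 * (d * morawetzWeight R x ^ 3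
      - 3 * ‖x‖ ^ 2 * morawetzWeight R x ^ 5) := by
  have hd' : (1 : ℝ) ≤ d := mod_cast hd
  have hw : 0 ≤ morawetzWeight R x ^ 3 := by
    have := morawetzWeight_pos (zero_lt_one.trans_le hR) x
    positivity
  have hy : ‖x‖ ^ 2 * morawetzWeight R x ^ 2 ≤ 1 := by
    nlinarith [morawetzWeight_sq_mul (zero_lt_one.trans_le hR) x,
      mul_nonneg (sq_nonneg R) (sq_nonneg (morawetzWeight R x))]
  have hcoeff : -(1 / 4) ≤ ((d : ℝ) - 1) / 4 * (d - 3 * (‖x‖ ^ 2 * morawetzWeight R x ^ 2)) := by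
    nlinarith [sq_nonneg ((d : ℝ) - 2)]
  have hcube := morawetzWeight_pow_three_le_four_mul_decayProfile ha hγ hR x
  calc -decayProfile a γ x ≤ -(1 / 4) * morawetzWeight R x ^ 3 := by linarith
    _ ≤ ((d : ℝ) - 1) / 4 * (d - 3 * (‖x‖ ^ 2 * morawetzWeight R x ^ 2)) *
          morawetzWeight R x ^ 3 := mul_le_mul_of_nonneg_right hcoeff hw
    _ = _ := by ring

/-- The left hand side of the Helmholtz equation `-Δu + Vu + iεu - τu`. -/
def helmholtz {d : ℕ} (ε τ : ℝ) (V : Ed d → ℝ) (u : Ed d → ℂ) (x : Ed d) : ℂ :=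
  -lap u x + (V x - τ) • u x + ε • (Complex.I * u x)

lemma euler_sub_const (V : Ed d → ℝ) (τ : ℝ) (x : Ed d) :
    euler (fun y => V y - τ) x = euler V x := by
  rw [euler, fderiv_sub_const, euler]

lemma half_sq_mul_morawetzWeight_le_divergence (hV : IsLongRange a γ V) (hd : 1 ≤ d) (ha : 1 ≤ a)
    (hγ : γ ≤ 2) (hR : 1 ≤ R) (hu : ContDiff ℝ 2 u) (τ : ℝ) (x : Ed d) :
    R ^ 2 * morawetzWeight R x ^ 3 / 2 * (gradNorm u x ^ 2 + τ * ‖u x‖ ^ 2)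
      ≤ 9 / 4 * decayProfile a γ x * ‖u x‖ ^ 2
        - inner ℝ (lap u x - (V x - τ) • u x) (morawetzMultiplier R u x)
        + divergence (morawetzFlux R (fun y => V y - τ) u) x := by
  have hR₀ : 0 < R := zero_lt_one.trans_le hR
  have hw := morawetzWeight_pos hR₀ x
  have hgrad : morawetzWeight R x ^ 3 * ‖euler u x‖ ^ 2 ≤
      morawetzWeight R x ^ 3 * (‖x‖ * gradNorm u x) ^ 2 := by
    gcongr
    exact norm_fderiv_apply_le_mul_gradNorm u x x
  have hzeroth := mul_le_mul_of_nonneg_right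
    (neg_decayProfile_le_morawetz_zeroth_order hd ha hγ hR x) (sq_nonneg ‖u x‖)
  have hradial := mul_le_mul_of_nonneg_right
    (morawetzWeight_mul_euler_le hV (by linarith) hR₀ x) (sq_nonneg ‖u x‖)
  have hpotential : R ^ 2 * morawetzWeight R x ^ 3 * V x * ‖u x‖ ^ 2 ≤
      3 / 2 * decayProfile a γ x * ‖u x‖ ^ 2 := by
    refine mul_le_mul_of_nonneg_right ?_ (sq_nonneg _)
    exact (mul_le_mul_of_nonneg_left (le_abs_self _) (by positivity)).trans
      (sq_mul_morawetzWeight_pow_three_mul_abs_le hV (by linarith) hR x)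
  rw [divergence_morawetzFlux hR₀ hu (hV.contDiff.sub contDiff_const), euler_sub_const]
  have hsplit := congrArg (· * gradNorm u x ^ 2 / 2) (sq_mul_morawetzWeight_pow_three hR₀ x)
  nlinarith

theorem morawetz_pointwise (hV : IsLongRange a γ V) (hd : 1 ≤ d) (ha : 1 ≤ a) (hγ : γ ≤ 2)
    (hR : 1 ≤ R) (hu : ContDiff ℝ 2 u) (ε τ : ℝ) (x : Ed d) :
    R ^ 2 * morawetzWeight R x ^ 3 / 2 * (gradNorm u x ^ 2 + τ * ‖u x‖ ^ 2)
      ≤ 9 / 4 * decayProfile a γ x * ‖u x‖ ^ 2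
        + ‖helmholtz ε τ V u x‖ * (gradNorm u x + ((d : ℝ) - 1) / 2 * ‖u x‖)
        + |ε| * (‖u x‖ * gradNorm u x)
        + divergence (morawetzFlux R (fun y => V y - τ) u) x := by
  have hsource : -‖helmholtz ε τ V u x‖ * (gradNorm u x + ((d : ℝ) - 1) / 2 * ‖u x‖) ≤
      -inner ℝ (helmholtz ε τ V u x) (morawetzMultiplier R u x) := by
    rw [neg_mul, neg_le_neg_iff]
    exact (real_inner_le_norm _ _).trans
      (mul_le_mul_of_nonneg_left (norm_morawetzMultiplier_le hd hR u x) (norm_nonneg _))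
  have hε : -(|ε| * (‖u x‖ * gradNorm u x)) ≤
      ε * inner ℝ (Complex.I * u x) (morawetzMultiplier R u x) := by
    refine neg_le_of_neg_le ((neg_le_abs _).trans ?_)
    rw [abs_mul]
    exact mul_le_mul_of_nonneg_left
      (abs_inner_I_mul_morawetzMultiplier_le (zero_lt_one.trans_le hR) u x) (abs_nonneg ε)
  have heq : lap u x - (V x - τ) • u x = ε • (Complex.I * u x) - helmholtz ε τ V u x := by
    rw [helmholtz]
    abel
  have hmain := half_sq_mul_morawetzWeight_le_divergence hV hd ha hγ hR hu τ x
  rw [heq, inner_sub_left, real_inner_smul_left] at hmain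
  linarith

lemma abs_morawetzRadialFlux_le (hd : 1 ≤ d) (hR : 1 ≤ R) {M : ℝ} (hM : ∀ x, |W x| ≤ M)
    (u : Ed d → ℂ) (x : Ed d) :
    |morawetzRadialFlux R W u x| ≤ morawetzWeight R x *
      (2⁻¹ * (((d : ℝ) - 1) / 2 * ‖u x‖ ^ 2 + gradNorm u x ^ 2 + M * ‖u x‖ ^ 2)) := by
  have hc : 0 ≤ ((d : ℝ) - 1) / 2 := by
    have : (1 : ℝ) ≤ d := mod_cast hd
    linarith
  have hw := (morawetzWeight_pos (zero_lt_one.trans_le hR) x).le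
  have hcube : morawetzWeight R x ^ 3 ≤ morawetzWeight R x :=
    pow_le_of_le_one hw (morawetzWeight_le_one hR x) three_ne_zero
  have hzeroth : ((d : ℝ) - 1) / 2 * (morawetzWeight R x ^ 3 * ‖u x‖ ^ 2) ≤
      ((d : ℝ) - 1) / 2 * (morawetzWeight R x * ‖u x‖ ^ 2) := by gcongr
  have hzeroth₀ : 0 ≤ ((d : ℝ) - 1) / 2 * (morawetzWeight R x ^ 3 * ‖u x‖ ^ 2) := by positivity
  have hgrad₀ : 0 ≤ morawetzWeight R x * gradNorm u x ^ 2 := by positivity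
  have hpotential : |W x * (morawetzWeight R x * ‖u x‖ ^ 2)| ≤
      M * (morawetzWeight R x * ‖u x‖ ^ 2) := by
    rw [abs_mul, abs_of_nonneg (by positivity : 0 ≤ morawetzWeight R x * ‖u x‖ ^ 2)]
    gcongr
    exact hM x
  obtain ⟨hlower, hupper⟩ := abs_le.1 hpotential
  rw [morawetzRadialFlux, abs_le]
  constructor <;> linarith

lemma abs_morawetzRadialFlux_mul_coord_le (hd : 1 ≤ d) (hR : 1 ≤ R) {M : ℝ} (hM : ∀ x, |W x| ≤ M)
    (u : Ed d → ℂ) (i : Fin d) (x : Ed d) :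
    |morawetzRadialFlux R W u x * x i| ≤
      2⁻¹ * (((d : ℝ) - 1) / 2 * ‖u x‖ ^ 2 + gradNorm u x ^ 2 + M * ‖u x‖ ^ 2) := by
  have hflux := abs_morawetzRadialFlux_le hd hR hM u x
  have hw := morawetzWeight_pos (zero_lt_one.trans_le hR) x
  set Q := 2⁻¹ * (((d : ℝ) - 1) / 2 * ‖u x‖ ^ 2 + gradNorm u x ^ 2 + M * ‖u x‖ ^ 2)
  have hQ : 0 ≤ Q := nonneg_of_mul_nonneg_right ((abs_nonneg _).trans hflux) hw
  calc |morawetzRadialFlux R W u x * x i|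
      ≤ morawetzWeight R x * Q * ‖x‖ := by
        rw [abs_mul]
        exact mul_le_mul hflux (PiLp.norm_apply_le x i) (abs_nonneg _) (by positivity)
    _ = morawetzWeight R x * ‖x‖ * Q := by ring
    _ ≤ Q := mul_le_of_le_one_left hQ
        (morawetzWeight_mul_norm_le_one (zero_lt_one.trans_le hR) x)

lemma abs_morawetzFlux_le (hd : 1 ≤ d) (hR : 1 ≤ R) {M : ℝ} (hM : ∀ x, |W x| ≤ M)
    (u : Ed d → ℂ) (i : Fin d) (x : Ed d) :
    |morawetzFlux R W u i x| ≤ (d + 1 + M) * (gradNorm u x ^ 2 + ‖u x‖ ^ 2) := by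
  have hd' : (1 : ℝ) ≤ d := mod_cast hd
  have hM₀ : 0 ≤ M := (abs_nonneg _).trans (hM x)
  have hB := gradNorm_nonneg u x
  have hinner : |inner ℝ (pd u i x) (morawetzMultiplier R u x)| ≤
      gradNorm u x * (gradNorm u x + ((d : ℝ) - 1) / 2 * ‖u x‖) :=
    (abs_real_inner_le_norm _ _).trans (mul_le_mul (norm_pd_le_gradNorm u i x)
      (norm_morawetzMultiplier_le hd hR u x) (norm_nonneg _) hB)
  have hradial := abs_morawetzRadialFlux_mul_coord_le hd hR hM u i x
  have hyoung := mul_nonneg (sub_nonneg.2 hd') (sq_nonneg (gradNorm u x - ‖u x‖))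
  refine (abs_add_le _ _).trans ((add_le_add hinner hradial).trans ?_)
  have := mul_nonneg hM₀ (sq_nonneg (gradNorm u x))
  have := mul_nonneg hM₀ (sq_nonneg (‖u x‖))
  nlinarith [sq_nonneg ‖u x‖, sq_nonneg (gradNorm u x)]

end PointwiseMorawetz

/-! ### Integrated estimates -/

/-- A square integrable solution, with square integrable gradient, of
`-Δu + Vu + iεu - τu = h` with `|h| ≤ g + m |u|`, where `V` is a long range potential and
`m = a (1 + |x|)^{-γ-1}`. A short range potential is part of `h`, and `g` plays the role of the
source; only the size of `h` matters, so that neither of the two has to be measurable. -/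
structure IsHelmholtzSolution {d : ℕ} (a γ ε τ : ℝ) (V g : Ed d → ℝ) (u : Ed d → ℂ) : Prop where
  longRange : IsLongRange a γ V
  contDiff : ContDiff ℝ 2 u
  continuous_source : Continuous g
  source_nonneg : ∀ x, 0 ≤ g x
  norm_helmholtz_le : ∀ x, ‖helmholtz ε τ V u x‖ ≤ g x + decayProfile a γ x * ‖u x‖
  integrable_norm_sq : Integrable fun x => ‖u x‖ ^ 2
  integrable_gradNorm_sq : Integrable fun x => gradNorm u x ^ 2
  integrable_source_sq : Integrable fun x => g x ^ 2

section Pairing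

variable {d : ℕ} {u : Ed d → ℂ}

lemma inner_mul_self_right (z w : ℂ) : inner ℝ w (z * w) = z.re * ‖w‖ ^ 2 := by
  simp only [Complex.inner, Complex.sq_norm, Complex.normSq_apply, Complex.mul_re, Complex.mul_im,
    Complex.conj_re, Complex.conj_im]
  ring

lemma inner_I_mul_mul_self_right (z w : ℂ) :
    inner ℝ (Complex.I * w) (z * w) = z.im * ‖w‖ ^ 2 := by
  simp only [Complex.inner, Complex.sq_norm, Complex.normSq_apply, Complex.mul_re, Complex.mul_im,
    Complex.conj_re, Complex.conj_im, Complex.I_re, Complex.I_im]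
  ring

lemma inner_helmholtz_mul_self_add_divergence (hu : ContDiff ℝ 2 u) (ε τ : ℝ) (V : Ed d → ℝ)
    (z : ℂ) (x : Ed d) :
    inner ℝ (helmholtz ε τ V u x) (z * u x)
        + divergence (fun i y => inner ℝ (pd u i y) (z * u y)) x =
      z.re * (gradNorm u x ^ 2 + (V x - τ) * ‖u x‖ ^ 2) + ε * (z.im * ‖u x‖ ^ 2) := by
  have hu' : DifferentiableAt ℝ u x := hu.differentiable two_ne_zero x
  have hpd (i : Fin d) : pd (fun y => z * u y) i x = z * pd u i x := by
    rw [pd, fderiv_const_mul hu']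
    rfl
  rw [divergence_inner_pd hu (hu'.const_mul z), helmholtz, inner_add_left, inner_add_left,
    inner_neg_left, real_inner_smul_left, real_inner_smul_left, inner_I_mul_mul_self_right,
    inner_mul_self_right, gradNorm_sq, mul_add, Finset.mul_sum]
  simp only [hpd, inner_mul_self_right]
  ring

end Pairing

lemma integrable_mul_of_integrable_sq {α : Type*} [MeasurableSpace α] {μ : Measure α}
    {φ ψ : α → ℝ} (hφ : AEStronglyMeasurable φ μ) (hψ : AEStronglyMeasurable ψ μ)
    (hφ₂ : Integrable (fun x => φ x ^ 2) μ) (hψ₂ : Integrable (fun x => ψ x ^ 2) μ) :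
    Integrable (fun x => φ x * ψ x) μ :=
  ((memLp_two_iff_integrable_sq hφ).2 hφ₂).integrable_mul
    ((memLp_two_iff_integrable_sq hψ).2 hψ₂)

lemma continuous_gradNorm {d : ℕ} {u : Ed d → ℂ} (hu : ContDiff ℝ 1 u) :
    Continuous (gradNorm u) :=
  Real.continuous_sqrt.comp (continuous_finsetSum _ fun _ _ =>
    ((hu.continuous_fderiv one_ne_zero).clm_apply continuous_const).norm.pow 2)

namespace IsHelmholtzSolution

variable {d : ℕ} {a γ ε τ : ℝ} {V g : Ed d → ℝ} {u : Ed d → ℂ}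

protected lemma continuous_gradNorm (h : IsHelmholtzSolution a γ ε τ V g u) :
    Continuous (gradNorm u) :=
  _root_.continuous_gradNorm (h.contDiff.of_le one_le_two)

lemma integrable_norm_mul_gradNorm (h : IsHelmholtzSolution a γ ε τ V g u) :
    Integrable fun x => ‖u x‖ * gradNorm u x :=
  integrable_mul_of_integrable_sq h.contDiff.continuous.norm.aestronglyMeasurable
    h.continuous_gradNorm.aestronglyMeasurable h.integrable_norm_sq
    h.integrable_gradNorm_sq

lemma integrable_source_mul_norm (h : IsHelmholtzSolution a γ ε τ V g u) :
    Integrable fun x => g x * ‖u x‖ :=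
  integrable_mul_of_integrable_sq h.continuous_source.aestronglyMeasurable
    h.contDiff.continuous.norm.aestronglyMeasurable h.integrable_source_sq h.integrable_norm_sq

lemma integrable_source_mul_gradNorm (h : IsHelmholtzSolution a γ ε τ V g u) :
    Integrable fun x => g x * gradNorm u x :=
  integrable_mul_of_integrable_sq h.continuous_source.aestronglyMeasurable
    h.continuous_gradNorm.aestronglyMeasurable h.integrable_source_sq
    h.integrable_gradNorm_sq

lemma abs_potential_le (h : IsHelmholtzSolution a γ ε τ V g u) (ha : 0 ≤ a) (hγ : 0 ≤ γ)
    (x : Ed d) : |V x| ≤ a :=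
  (h.longRange.abs_le x).trans (mul_one_add_norm_rpow_le ha (by linarith) x)

lemma abs_potential_sub_le (h : IsHelmholtzSolution a γ ε τ V g u) (ha : 0 ≤ a) (hγ : 0 ≤ γ)
    (x : Ed d) : |V x - τ| ≤ a + |τ| :=
  (abs_sub _ _).trans (add_le_add (h.abs_potential_le ha hγ x) le_rfl)

end IsHelmholtzSolution

lemma integrable_decayProfile_mul {d : ℕ} {a γ : ℝ} (ha : 0 ≤ a) (hγ : 0 ≤ γ) {φ : Ed d → ℝ}
    (hφ : Integrable φ) : Integrable fun x => decayProfile a γ x * φ x :=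
  hφ.bdd_mul (c := a) continuous_decayProfile.aestronglyMeasurable
    (.of_forall fun x => by
      rw [Real.norm_of_nonneg (decayProfile_nonneg ha x)]
      exact decayProfile_le ha hγ x)

section MorawetzIntegral

variable {d : ℕ} {R : ℝ} {φ : Ed d → ℝ}

lemma integrable_morawetzWeight_mul (hR : 1 ≤ R) (hφ : Integrable φ) :
    Integrable fun x => R ^ 2 * morawetzWeight R x ^ 3 / 2 * φ x := by
  have hR₀ : 0 < R := by linarith
  refine hφ.bdd_mul (c := 1) (((contDiff_morawetzWeight (n := 0) hR₀).continuous.pow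
    3).const_mul _ |>.div_const _).aestronglyMeasurable (.of_forall fun x => ?_)
  have hpos := morawetzWeight_pos hR₀ x
  rw [Real.norm_of_nonneg (by positivity), sq_mul_morawetzWeight_pow_three hR₀]
  have : 0 ≤ ‖x‖ ^ 2 * morawetzWeight R x ^ 3 := by positivity
  linarith [morawetzWeight_le_one hR x]

lemma inv_mul_setIntegral_ball_le (hR : 1 ≤ R) (hφ : Integrable φ) (hφ₀ : ∀ x, 0 ≤ φ x) :
    R⁻¹ * ∫ x in ball 0 R, φ x ≤ 6 * ∫ x, R ^ 2 * morawetzWeight R x ^ 3 / 2 * φ x := by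
  have hR₀ : 0 < R := by linarith
  have hint := (integrable_morawetzWeight_mul hR hφ).const_mul 6
  have hnonneg (x : Ed d) : 0 ≤ 6 * (R ^ 2 * morawetzWeight R x ^ 3 / 2 * φ x) := by
    have := morawetzWeight_pos hR₀ x
    have := hφ₀ x
    positivity
  rw [← integral_const_mul, ← integral_const_mul]
  refine (setIntegral_mono_on (hφ.const_mul _).integrableOn hint.integrableOn measurableSet_ball
    fun x hx => ?_).trans (setIntegral_le_integral hint (.of_forall hnonneg))
  have hweight := inv_three_mul_le_sq_mul_morawetzWeight_pow_three hR₀ (mem_ball_zero_iff.1 hx).le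
  rw [mul_inv] at hweight
  have := mul_le_mul_of_nonneg_right hweight (hφ₀ x)
  linarith

end MorawetzIntegral

namespace IsHelmholtzSolution

variable {d : ℕ} {a γ ε τ : ℝ} {V g : Ed d → ℝ} {u : Ed d → ℂ}

lemma integral_pairing_le (h : IsHelmholtzSolution a γ ε τ V g u) (ha : 0 ≤ a) (hγ : 0 ≤ γ)
    {z : ℂ} (hz : ‖z‖ ≤ 1) :
    ∫ x, (z.re * (gradNorm u x ^ 2 + (V x - τ) * ‖u x‖ ^ 2) + ε * (z.im * ‖u x‖ ^ 2)) ≤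
      (∫ x, g x * ‖u x‖) + ∫ x, decayProfile a γ x * ‖u x‖ ^ 2 := by
  have hpotential : Integrable fun x => (V x - τ) * ‖u x‖ ^ 2 :=
    h.integrable_norm_sq.bdd_mul
      (h.longRange.contDiff.continuous.sub continuous_const).aestronglyMeasurable
      (.of_forall (h.abs_potential_sub_le ha hγ))
  have hlhs := ((h.integrable_gradNorm_sq.add hpotential).const_mul z.re).add
    ((h.integrable_norm_sq.const_mul z.im).const_mul ε)
  have hrhs := h.integrable_source_mul_norm.add
    (integrable_decayProfile_mul ha hγ h.integrable_norm_sq)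
  have hflux (i : Fin d) : ContDiff ℝ 1 fun x => inner ℝ (pd u i x) (z * u x) :=
    (contDiff_pd h.contDiff i).inner ℝ (contDiff_const.mul (h.contDiff.of_le one_le_two))
  have hfluxInt (i : Fin d) : Integrable fun x => inner ℝ (pd u i x) (z * u x) := by
    refine h.integrable_norm_mul_gradNorm.mono' (hflux i).continuous.aestronglyMeasurable
      (.of_forall fun x => (norm_inner_le_norm _ _).trans ?_)
    rw [norm_mul, mul_comm]
    exact mul_le_mul (mul_le_of_le_one_left (norm_nonneg _) hz) (norm_pd_le_gradNorm u i x)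
      (norm_nonneg _) (norm_nonneg _)
  have hle := integral_nonpos_of_le_divergence hflux hfluxInt (hlhs.sub hrhs) fun x => by
    have hinner : inner ℝ (helmholtz ε τ V u x) (z * u x) ≤
        (g x + decayProfile a γ x * ‖u x‖) * ‖u x‖ :=
      (real_inner_le_norm _ _).trans (mul_le_mul (h.norm_helmholtz_le x)
        ((norm_mul_le _ _).trans (mul_le_of_le_one_left (norm_nonneg _) hz)) (norm_nonneg _)
        ((norm_nonneg _).trans (h.norm_helmholtz_le x)))
    have heq := inner_helmholtz_mul_self_add_divergence h.contDiff ε τ V z x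
    simp only [Pi.sub_apply, Pi.add_apply]
    linarith
  rw [integral_sub' hlhs hrhs, sub_nonpos] at hle
  exact hle.trans_eq (integral_add h.integrable_source_mul_norm
    (integrable_decayProfile_mul ha hγ h.integrable_norm_sq))

theorem abs_mul_integral_norm_sq_le (h : IsHelmholtzSolution a γ ε τ V g u) (ha : 0 ≤ a)
    (hγ : 0 ≤ γ) :
    |ε| * ∫ x, ‖u x‖ ^ 2 ≤
      (∫ x, g x * ‖u x‖) + ∫ x, decayProfile a γ x * ‖u x‖ ^ 2 := by
  have hpos := h.integral_pairing_le ha hγ (z := Complex.I) (by simp)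
  have hneg := h.integral_pairing_le ha hγ (z := -Complex.I) (by simp)
  simp only [Complex.I_re, Complex.I_im, Complex.neg_re, Complex.neg_im, neg_zero, zero_mul,
    zero_add, one_mul, neg_mul, mul_neg, integral_neg, integral_const_mul] at hpos hneg
  rcases abs_cases ε with ⟨heq, -⟩ | ⟨heq, -⟩ <;> rw [heq]
  · exact hpos
  · rwa [neg_mul]

theorem integral_gradNorm_sq_le (h : IsHelmholtzSolution a γ ε τ V g u) (ha : 0 ≤ a)
    (hγ : 0 ≤ γ) :
    ∫ x, gradNorm u x ^ 2 ≤ (τ + a) * (∫ x, ‖u x‖ ^ 2) +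
      ((∫ x, g x * ‖u x‖) + ∫ x, decayProfile a γ x * ‖u x‖ ^ 2) := by
  have hpairing := h.integral_pairing_le ha hγ (z := 1) (by simp)
  simp only [Complex.one_re, Complex.one_im, one_mul, zero_mul, mul_zero, add_zero] at hpairing
  have hpotential : Integrable fun x => (V x - τ) * ‖u x‖ ^ 2 :=
    h.integrable_norm_sq.bdd_mul
      (h.longRange.contDiff.continuous.sub continuous_const).aestronglyMeasurable
      (.of_forall (h.abs_potential_sub_le ha hγ))
  have hlower : ∫ x, -(τ + a) * ‖u x‖ ^ 2 ≤ ∫ x, (V x - τ) * ‖u x‖ ^ 2 := by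
    refine integral_mono (h.integrable_norm_sq.const_mul _) hpotential fun x => ?_
    have hV := (abs_le.1 (h.abs_potential_le ha hγ x)).1
    exact mul_le_mul_of_nonneg_right (by linarith) (sq_nonneg _)
  rw [integral_add h.integrable_gradNorm_sq hpotential] at hpairing
  rw [integral_const_mul] at hlower
  linarith

lemma integrable_morawetzFlux (h : IsHelmholtzSolution a γ ε τ V g u) (hd : 1 ≤ d) (ha : 0 ≤ a)
    (hγ : 0 ≤ γ) {R : ℝ} (hR : 1 ≤ R) (i : Fin d) :
    Integrable (morawetzFlux R (fun y => V y - τ) u i) :=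
  ((h.integrable_gradNorm_sq.add h.integrable_norm_sq).const_mul (d + 1 + (a + |τ|))).mono'
    (contDiff_morawetzFlux (by linarith) h.contDiff (h.longRange.contDiff.sub contDiff_const)
      i).continuous.aestronglyMeasurable
    (.of_forall (abs_morawetzFlux_le hd hR (h.abs_potential_sub_le ha hγ) u i))

theorem integral_morawetz_le (h : IsHelmholtzSolution a γ ε τ V g u) (hd : 1 ≤ d) (ha : 1 ≤ a)
    (hγ : 0 ≤ γ) (hγ₂ : γ ≤ 2) {R : ℝ} (hR : 1 ≤ R) :
    ∫ x, R ^ 2 * morawetzWeight R x ^ 3 / 2 * (gradNorm u x ^ 2 + τ * ‖u x‖ ^ 2) ≤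
      (9 / 4 + ((d : ℝ) - 1) / 2) * (∫ x, decayProfile a γ x * ‖u x‖ ^ 2)
        + (∫ x, decayProfile a γ x * (‖u x‖ * gradNorm u x))
        + (∫ x, g x * gradNorm u x) + ((d : ℝ) - 1) / 2 * (∫ x, g x * ‖u x‖)
        + |ε| * ∫ x, ‖u x‖ * gradNorm u x := by
  have ha₀ : 0 ≤ a := by linarith
  have hd' : (1 : ℝ) ≤ d := mod_cast hd
  have hdensity := integrable_morawetzWeight_mul hR
    (h.integrable_gradNorm_sq.add (h.integrable_norm_sq.const_mul τ))
  have hnormSq := (integrable_decayProfile_mul ha₀ hγ h.integrable_norm_sq).const_mul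
    (9 / 4 + ((d : ℝ) - 1) / 2)
  have hmixed := integrable_decayProfile_mul ha₀ hγ h.integrable_norm_mul_gradNorm
  have hsourceGrad := h.integrable_source_mul_gradNorm
  have hsource := h.integrable_source_mul_norm.const_mul (((d : ℝ) - 1) / 2)
  have habsorption := h.integrable_norm_mul_gradNorm.const_mul |ε|
  have hrhs := (((hnormSq.add hmixed).add hsourceGrad).add hsource).add habsorption
  have hle := integral_nonpos_of_le_divergence
    (contDiff_morawetzFlux (by linarith) h.contDiff (h.longRange.contDiff.sub contDiff_const))
    (h.integrable_morawetzFlux hd ha₀ hγ hR) (hdensity.sub hrhs) fun x => by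
      have hpoint := morawetz_pointwise h.longRange hd ha hγ₂ hR h.contDiff ε τ x
      have hmultiplier : 0 ≤ gradNorm u x + ((d : ℝ) - 1) / 2 * ‖u x‖ :=
        add_nonneg (gradNorm_nonneg u x) (mul_nonneg (by linarith) (norm_nonneg _))
      have hhelmholtz := mul_le_mul_of_nonneg_right (h.norm_helmholtz_le x) hmultiplier
      simp only [Pi.sub_apply, Pi.add_apply]
      linarith
  rw [integral_sub' hdensity hrhs, sub_nonpos,
    integral_add' (((hnormSq.add hmixed).add hsourceGrad).add hsource) habsorption,
    integral_add' ((hnormSq.add hmixed).add hsourceGrad) hsource,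
    integral_add' (hnormSq.add hmixed) hsourceGrad, integral_add' hnormSq hmixed] at hle
  simpa only [integral_const_mul, Pi.add_apply] using hle

end IsHelmholtzSolution

/-! ### Morrey–Campanato norms -/

section MorreyCampanato

variable {d : ℕ} {ρ : ℝ}

lemma setLIntegral_ball_le_mul_nX2r {R : ℝ} (hR₀ : 0 < R) (hR : ρ ≤ R) (G : Ed d → ℝ≥0∞) :
    ∫⁻ x in ball (0 : Ed d) R, G x ≤ ENNReal.ofReal R * nX2r ρ G := by
  rw [← ENNReal.inv_mul_le_iff (ENNReal.ofReal_pos.2 hR₀).ne' ENNReal.ofReal_ne_top]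
  exact le_iSup₂ (f := fun (R : ℝ) (_ : ρ ≤ R) =>
    (ENNReal.ofReal R)⁻¹ * ∫⁻ x in ball (0 : Ed d) R, G x) R hR

lemma nX2r_le_inv_mul_lintegral (ρ : ℝ) (G : Ed d → ℝ≥0∞) :
    nX2r ρ G ≤ (ENNReal.ofReal ρ)⁻¹ * ∫⁻ x, G x :=
  iSup₂_le fun _ hR => mul_le_mul'
    (ENNReal.inv_le_inv.2 (ENNReal.ofReal_le_ofReal hR)) (setLIntegral_le_lintegral _ _)

lemma decayProfile_le_of_pow_le {a γ : ℝ} (ha : 0 ≤ a) (hγ : 0 ≤ γ) {x : Ed d} {k : ℕ}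
    (hk : 2 ^ k ≤ 1 + ‖x‖) : decayProfile a γ x ≤ a * ((2 ^ (-γ)) ^ k / 2 ^ k) := by
  refine mul_le_mul_of_nonneg_left ?_ ha
  calc (1 + ‖x‖) ^ (-γ - 1) ≤ ((2 : ℝ) ^ k) ^ (-γ - 1) :=
        Real.rpow_le_rpow_of_nonpos (by positivity) hk (by linarith)
    _ = (2 ^ (-γ)) ^ k / 2 ^ k := by
        rw [Real.rpow_sub (by positivity), Real.rpow_one, Real.rpow_pow_comm zero_le_two]

lemma decayProfile_mul_le_tsum {a γ : ℝ} (ha : 0 ≤ a) (hγ : 0 ≤ γ) (G : Ed d → ℝ≥0∞)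
    (x : Ed d) :
    ENNReal.ofReal (decayProfile a γ x) * G x ≤
      ∑' k : ℕ, ENNReal.ofReal (a * ((2 ^ (-γ)) ^ k / 2 ^ k)) *
        (ball 0 (2 ^ (k + 1))).indicator G x := by
  obtain ⟨k, hk, hk'⟩ := exists_nat_pow_near (x := 1 + ‖x‖) (y := 2)
    (by linarith [norm_nonneg x]) one_lt_two
  have hx : x ∈ ball (0 : Ed d) (2 ^ (k + 1)) := by
    rw [mem_ball_zero_iff]
    linarith
  refine le_trans ?_ (ENNReal.le_tsum k)
  rw [indicator_of_mem hx]
  gcongr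
  exact decayProfile_le_of_pow_le ha hγ hk

/-- The norm of `decayProfile a γ` as a multiplier from the Morrey–Campanato space to `L¹`, up to
a factor: the geometric series `∑ₖ 2 a 2^{-γk}` over the balls of radius `2^{k+1}`. -/
def decayProfileNorm (a γ : ℝ) : ℝ := 2 * a * (1 - 2 ^ (-γ))⁻¹

lemma hasSum_decayProfileNorm (a : ℝ) {γ : ℝ} (hγ : 0 < γ) :
    HasSum (fun k : ℕ => 2 * a * (2 ^ (-γ)) ^ k) (decayProfileNorm a γ) :=
  (hasSum_geometric_of_lt_one (by positivity)
    (Real.rpow_lt_one_of_one_lt_of_neg one_lt_two (by linarith))).mul_left _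

lemma decayProfileNorm_nonneg {a γ : ℝ} (ha : 0 ≤ a) (hγ : 0 < γ) : 0 ≤ decayProfileNorm a γ :=
  (hasSum_decayProfileNorm a hγ).nonneg fun _ => by positivity

theorem lintegral_decayProfile_mul_le {a γ : ℝ} (ha : 0 ≤ a) (hγ : 0 < γ) (hρ : ρ ≤ 2)
    {G : Ed d → ℝ≥0∞} (hG : Measurable G) :
    ∫⁻ x, ENNReal.ofReal (decayProfile a γ x) * G x ≤
      ENNReal.ofReal (decayProfileNorm a γ) * nX2r ρ G := by
  calc ∫⁻ x, ENNReal.ofReal (decayProfile a γ x) * G x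
      ≤ ∫⁻ x, ∑' k : ℕ, ENNReal.ofReal (a * ((2 ^ (-γ)) ^ k / 2 ^ k)) *
          (ball 0 (2 ^ (k + 1))).indicator G x :=
        lintegral_mono (decayProfile_mul_le_tsum ha hγ.le G)
    _ = ∑' k : ℕ, ENNReal.ofReal (a * ((2 ^ (-γ)) ^ k / 2 ^ k)) *
          ∫⁻ x in ball 0 (2 ^ (k + 1)), G x := by
        rw [lintegral_tsum fun k =>
          ((hG.indicator measurableSet_ball).const_mul _).aemeasurable]
        simp only [lintegral_const_mul _ (hG.indicator measurableSet_ball),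
          lintegral_indicator measurableSet_ball]
    _ ≤ ∑' k : ℕ, ENNReal.ofReal (2 * a * (2 ^ (-γ)) ^ k) * nX2r ρ G := by
        refine ENNReal.tsum_le_tsum fun k => ?_
        have hradius : ρ ≤ 2 ^ (k + 1) :=
          hρ.trans (le_self_pow₀ one_le_two k.succ_ne_zero)
        refine (mul_le_mul_right
          (setLIntegral_ball_le_mul_nX2r (by positivity) hradius G) _).trans_eq ?_
        rw [← mul_assoc, ← ENNReal.ofReal_mul (by positivity), pow_succ]
        congr 2
        field_simp
    _ = ENNReal.ofReal (decayProfileNorm a γ) * nX2r ρ G := by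
        have hsum := hasSum_decayProfileNorm a hγ
        rw [ENNReal.tsum_mul_right, ← ENNReal.ofReal_tsum_of_nonneg (fun _ => by positivity)
          hsum.summable, hsum.tsum_eq]

lemma jIdx_le_iff (hρ : 0 < ρ) {j : ℤ} : jIdx ρ ≤ j ↔ ρ ≤ 2 ^ (j + 1) := by
  rw [jIdx, sub_le_iff_le_add, Int.ceil_le, Real.logb_le_iff_le_rpow one_lt_two hρ,
    Real.rpow_intCast]

lemma nXstarr_mono {G H : Ed d → ℝ≥0∞} (hGH : ∀ x, G x ≤ H x) :
    nXstarr ρ G ≤ nXstarr ρ H := by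
  unfold nXstarr
  gcongr <;> exact hGH _

lemma iUnion_shell_union_ball (hρ : 0 < ρ) :
    (⋃ j : {j : ℤ // jIdx ρ ≤ j}, shell d j) ∪ ball 0 ρ = univ := by
  refine eq_univ_of_forall fun x => ?_
  rcases lt_or_ge ‖x‖ ρ with hx | hx
  · exact Or.inr (mem_ball_zero_iff.2 hx)
  · obtain ⟨j, hj, hj'⟩ := exists_mem_Ioc_zpow (hρ.trans_le hx) one_lt_two
    exact Or.inl (mem_iUnion.2 ⟨⟨j, (jIdx_le_iff hρ).2 (hx.trans hj')⟩, hj, hj'⟩)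

lemma setLIntegral_mul_le_mul_nX2r {g v : Ed d → ℝ≥0∞} (hg : Measurable g) (hv : Measurable v)
    {s : Set (Ed d)} {r : ℝ} (hr : 0 < r) (hρ : ρ ≤ 2 * r) (hs : s ⊆ ball 0 (2 * r)) :
    ∫⁻ x in s, g x * v x ≤ (ENNReal.ofReal r * ∫⁻ x in s, g x ^ 2) ^ (1 / 2 : ℝ)
      * (2 * nX2r ρ (fun x => v x ^ 2)) ^ (1 / 2 : ℝ) := by
  have hball : ∫⁻ x in s, v x ^ 2 ≤ ENNReal.ofReal r * (2 * nX2r ρ (fun x => v x ^ 2)) := by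
    refine (lintegral_mono_set hs).trans
      ((setLIntegral_ball_le_mul_nX2r (by positivity) hρ _).trans_eq ?_)
    rw [ENNReal.ofReal_mul zero_le_two, ENNReal.ofReal_ofNat]
    ring
  have hhalf : (0 : ℝ) ≤ 1 / 2 := by norm_num
  calc ∫⁻ x in s, g x * v x
      ≤ (∫⁻ x in s, g x ^ 2) ^ (1 / 2 : ℝ) * (∫⁻ x in s, v x ^ 2) ^ (1 / 2 : ℝ) := by
        simpa using ENNReal.lintegral_mul_le_Lp_mul_Lq (volume.restrict s)
          Real.HolderConjugate.two_two hg.aemeasurable hv.aemeasurable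
    _ ≤ (∫⁻ x in s, g x ^ 2) ^ (1 / 2 : ℝ)
        * (ENNReal.ofReal r * (2 * nX2r ρ (fun x => v x ^ 2))) ^ (1 / 2 : ℝ) := by gcongr
    _ = _ := by
        rw [ENNReal.mul_rpow_of_nonneg _ _ hhalf,
          ENNReal.mul_rpow_of_nonneg (ENNReal.ofReal r) _ hhalf]
        ring

theorem lintegral_mul_le_nXstarr_mul (hρ : 0 < ρ) {g v : Ed d → ℝ≥0∞} (hg : Measurable g)
    (hv : Measurable v) :
    ∫⁻ x, g x * v x ≤ nXstarr ρ (fun x => g x ^ 2)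
      * (2 * nX2r ρ (fun x => v x ^ 2)) ^ (1 / 2 : ℝ) := by
  rw [← setLIntegral_univ, ← iUnion_shell_union_ball hρ, nXstarr, add_mul,
    ← ENNReal.tsum_mul_right]
  refine (lintegral_union_le _ _ _).trans (add_le_add
    ((lintegral_iUnion_le _ _).trans (ENNReal.tsum_le_tsum fun j => ?_)) ?_)
  · have hj : ρ ≤ 2 ^ ((j : ℤ) + 1) := (jIdx_le_iff hρ).1 j.2
    refine setLIntegral_mul_le_mul_nX2r hg hv (by positivity) (by linarith) fun x hx => ?_
    rw [mem_ball_zero_iff]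
    linarith [hx.2]
  · exact setLIntegral_mul_le_mul_nX2r hg hv hρ (by linarith) (ball_subset_ball (by linarith))

/-- The Morrey–Campanato quantity `sup_{R ≥ ρ} (1/R) ∫_{B(0,R)} φ` as a real number. Its value is
meaningful for nonnegative integrable `φ`: the negative part of `φ` is discarded, and an infinite
supremum becomes `0`. -/
def morreyNorm (ρ : ℝ) (φ : Ed d → ℝ) : ℝ := (nX2r ρ fun x => ENNReal.ofReal (φ x)).toReal

lemma morreyNorm_nonneg (φ : Ed d → ℝ) : 0 ≤ morreyNorm ρ φ := ENNReal.toReal_nonneg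

variable {φ : Ed d → ℝ}

lemma nX2r_ofReal_ne_top (hρ : 0 < ρ) (hφ : Integrable φ) :
    (nX2r ρ fun x => ENNReal.ofReal (φ x)) ≠ ⊤ :=
  ne_top_of_le_ne_top (ENNReal.mul_ne_top (by simpa using hρ) hφ.lintegral_lt_top.ne)
    (nX2r_le_inv_mul_lintegral _ _)

lemma ofReal_morreyNorm (hρ : 0 < ρ) (hφ : Integrable φ) :
    ENNReal.ofReal (morreyNorm ρ φ) = nX2r ρ fun x => ENNReal.ofReal (φ x) :=
  ENNReal.ofReal_toReal (nX2r_ofReal_ne_top hρ hφ)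

lemma morreyNorm_le (hρ : 0 < ρ) (hφ : Integrable φ) (hφ₀ : ∀ x, 0 ≤ φ x) {K : ℝ} (hK₀ : 0 ≤ K)
    (hK : ∀ R, ρ ≤ R → R⁻¹ * ∫ x in ball 0 R, φ x ≤ K) : morreyNorm ρ φ ≤ K := by
  refine ENNReal.toReal_le_of_le_ofReal hK₀ (iSup₂_le fun R hR => ?_)
  rw [← ofReal_integral_eq_lintegral_ofReal hφ.integrableOn (.of_forall hφ₀),
    ← ENNReal.ofReal_inv_of_pos (hρ.trans_le hR),
    ← ENNReal.ofReal_mul (inv_nonneg.2 (hρ.le.trans hR))]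
  exact ENNReal.ofReal_le_ofReal (hK R hR)

lemma morreyNorm_le_inv_mul_integral (hρ : 0 < ρ) (hφ : Integrable φ) (hφ₀ : ∀ x, 0 ≤ φ x) :
    morreyNorm ρ φ ≤ ρ⁻¹ * ∫ x, φ x :=
  morreyNorm_le hρ hφ hφ₀ (mul_nonneg (inv_nonneg.2 hρ.le) (integral_nonneg hφ₀)) fun _ hR =>
    mul_le_mul (inv_anti₀ hρ hR) (setIntegral_le_integral hφ (.of_forall hφ₀))
      (integral_nonneg hφ₀) (inv_nonneg.2 hρ.le)

lemma integral_decayProfile_mul_le {a γ : ℝ} (ha : 0 ≤ a) (hγ : 0 < γ) (hρ : 0 < ρ)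
    (hρ₂ : ρ ≤ 2) (hφm : Measurable φ) (hφ : Integrable φ) (hφ₀ : ∀ x, 0 ≤ φ x) :
    ∫ x, decayProfile a γ x * φ x ≤ decayProfileNorm a γ * morreyNorm ρ φ := by
  have hK := decayProfileNorm_nonneg ha hγ
  rw [← ENNReal.ofReal_le_ofReal_iff (mul_nonneg hK (morreyNorm_nonneg φ)),
    ENNReal.ofReal_mul hK, ofReal_morreyNorm hρ hφ,
    ofReal_integral_eq_lintegral_ofReal (integrable_decayProfile_mul ha hγ.le hφ)
      (.of_forall fun x => mul_nonneg (decayProfile_nonneg ha x) (hφ₀ x))]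
  simp only [ENNReal.ofReal_mul (decayProfile_nonneg ha _)]
  exact lintegral_decayProfile_mul_le ha hγ hρ₂ hφm.ennreal_ofReal

lemma integral_mul_le_nXstarr_mul {g v : Ed d → ℝ} (hρ : 0 < ρ) (hg : Measurable g)
    (hv : Measurable v) (hv₂ : Integrable fun x => v x ^ 2) (hv₀ : ∀ x, 0 ≤ v x)
    (hgv : Integrable fun x => g x * v x)
    (hN : (nXstarr ρ fun x => ENNReal.ofReal (g x) ^ 2) ≠ ⊤) :
    ∫ x, g x * v x ≤ (nXstarr ρ fun x => ENNReal.ofReal (g x) ^ 2).toReal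
      * √(2 * morreyNorm ρ (fun x => v x ^ 2)) := by
  have hduality := lintegral_mul_le_nXstarr_mul hρ hg.ennreal_ofReal hv.ennreal_ofReal
  have hnorm : 2 * nX2r ρ (fun x => ENNReal.ofReal (v x) ^ 2) =
      ENNReal.ofReal (2 * morreyNorm ρ (fun x => v x ^ 2)) := by
    rw [ENNReal.ofReal_mul zero_le_two, ofReal_morreyNorm hρ hv₂, ENNReal.ofReal_ofNat]
    simp only [ENNReal.ofReal_pow (hv₀ _)]
  rw [hnorm, ENNReal.ofReal_rpow_of_nonneg (mul_nonneg zero_le_two (morreyNorm_nonneg _))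
    (by norm_num), ← Real.sqrt_eq_rpow, ← ENNReal.ofReal_toReal hN,
    ← ENNReal.ofReal_mul toReal_nonneg] at hduality
  simp only [← ENNReal.ofReal_mul' (hv₀ _)] at hduality
  calc ∫ x, g x * v x ≤ (∫⁻ x, ENNReal.ofReal (g x * v x)).toReal := by
        rw [integral_eq_lintegral_pos_part_sub_lintegral_neg_part hgv]
        exact sub_le_self _ toReal_nonneg
    _ ≤ _ := ENNReal.toReal_le_of_le_ofReal (by positivity) hduality

end MorreyCampanato

/-! ### Absorption -/

lemma integral_mul_mul_le_young {α : Type*} [MeasurableSpace α] {μ : Measure α} {w φ ψ : α → ℝ}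
    (hw : ∀ x, 0 ≤ w x) (hmul : Integrable (fun x => w x * (φ x * ψ x)) μ)
    (hφ : Integrable (fun x => w x * φ x ^ 2) μ) (hψ : Integrable (fun x => w x * ψ x ^ 2) μ)
    {s : ℝ} (hs : 0 < s) :
    ∫ x, w x * (φ x * ψ x) ∂μ ≤
      (s * (∫ x, w x * φ x ^ 2 ∂μ) + s⁻¹ * ∫ x, w x * ψ x ^ 2 ∂μ) / 2 := by
  rw [← integral_const_mul, ← integral_const_mul,
    ← integral_add (hφ.const_mul s) (hψ.const_mul s⁻¹), ← integral_div]
  refine integral_mono hmul (((hφ.const_mul s).add (hψ.const_mul s⁻¹)).div_const 2) fun x => ?_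
  have hsquare : 0 ≤ w x * (s⁻¹ * (s * φ x - ψ x) ^ 2) :=
    mul_nonneg (hw x) (mul_nonneg (inv_nonneg.2 hs.le) (sq_nonneg _))
  have hexpand : s⁻¹ * (s * φ x - ψ x) ^ 2 =
      s * φ x ^ 2 + s⁻¹ * ψ x ^ 2 - 2 * (φ x * ψ x) := by
    field_simp
    ring
  rw [hexpand] at hsquare
  linarith

lemma le_of_le_mul_sqrt_two_mul {q c : ℝ} (hq : 0 ≤ q) (hle : q ≤ c * √(2 * q)) :
    q ≤ 2 * c ^ 2 := by
  rcases hq.eq_or_lt with rfl | hpos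
  · positivity
  · have hsq := pow_le_pow_left₀ hq hle 2
    rw [mul_pow, Real.sq_sqrt (by positivity)] at hsq
    nlinarith

lemma integral_decayProfile_mul_sq_nonneg {d : ℕ} {a : ℝ} (γ : ℝ) (ha : 0 ≤ a)
    (φ : Ed d → ℝ) : 0 ≤ ∫ x, decayProfile a γ x * φ x ^ 2 :=
  integral_nonneg fun x => mul_nonneg (decayProfile_nonneg ha x) (sq_nonneg _)

lemma ofReal_norm_sq_eq_usq {d : ℕ} (u : Ed d → ℂ) (x : Ed d) :
    ENNReal.ofReal (‖u x‖ ^ 2) = usq u x := by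
  rw [ENNReal.ofReal_pow (norm_nonneg _), ofReal_norm]
  rfl

lemma ofReal_gradNorm_sq_eq_gradSq {d : ℕ} (u : Ed d → ℂ) (x : Ed d) :
    ENNReal.ofReal (gradNorm u x ^ 2) = gradSq u x := by
  rw [gradNorm_sq, ENNReal.ofReal_sum_of_nonneg fun _ _ => sq_nonneg _]
  exact Finset.sum_congr rfl fun i _ => ofReal_norm_sq_eq_usq (pd u i) x

/-- The quantity `‖∇u‖² + τ ‖u‖²` controlled by the resolvent estimate, in Morrey–Campanato norms
over the balls of radius at least `1`. -/
def morreyEnergy {d : ℕ} (τ : ℝ) (u : Ed d → ℂ) : ℝ :=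
  morreyNorm 1 (fun x => gradNorm u x ^ 2) + τ * morreyNorm 1 (fun x => ‖u x‖ ^ 2)

namespace IsHelmholtzSolution

variable {d : ℕ} {a γ ε τ : ℝ} {V g : Ed d → ℝ} {u : Ed d → ℂ}

lemma integral_source_mul_norm_nonneg (h : IsHelmholtzSolution a γ ε τ V g u) :
    0 ≤ ∫ x, g x * ‖u x‖ :=
  integral_nonneg fun x => mul_nonneg (h.source_nonneg x) (norm_nonneg _)

lemma integral_source_mul_gradNorm_nonneg (h : IsHelmholtzSolution a γ ε τ V g u) :
    0 ≤ ∫ x, g x * gradNorm u x :=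
  integral_nonneg fun x => mul_nonneg (h.source_nonneg x) (gradNorm_nonneg u x)

lemma ofReal_morreyEnergy (h : IsHelmholtzSolution a γ ε τ V g u) (hτ : 0 ≤ τ) :
    ENNReal.ofReal (morreyEnergy τ u) =
      nX2r 1 (gradSq u) + ENNReal.ofReal τ * nX2r 1 (usq u) := by
  rw [morreyEnergy, ENNReal.ofReal_add (morreyNorm_nonneg _)
    (mul_nonneg hτ (morreyNorm_nonneg _)), ENNReal.ofReal_mul hτ,
    ofReal_morreyNorm one_pos h.integrable_gradNorm_sq,
    ofReal_morreyNorm one_pos h.integrable_norm_sq]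
  simp only [ofReal_gradNorm_sq_eq_gradSq, ofReal_norm_sq_eq_usq]

theorem abs_mul_integral_norm_mul_gradNorm_le (h : IsHelmholtzSolution a γ ε τ V g u)
    (ha : 0 ≤ a) (hγ : 0 ≤ γ) (hτ : 0 < τ) (haτ : a ≤ τ) (hε : |ε| ≤ τ) :
    |ε| * ∫ x, ‖u x‖ * gradNorm u x ≤
      2 * √τ * ((∫ x, g x * ‖u x‖) + ∫ x, decayProfile a γ x * ‖u x‖ ^ 2) := by
  set A := (∫ x, g x * ‖u x‖) + ∫ x, decayProfile a γ x * ‖u x‖ ^ 2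
  have hs : 0 < √τ := Real.sqrt_pos.2 hτ
  have hmass : |ε| * ∫ x, ‖u x‖ ^ 2 ≤ A := h.abs_mul_integral_norm_sq_le ha hγ
  have hmass₀ : 0 ≤ |ε| * ∫ x, ‖u x‖ ^ 2 :=
    mul_nonneg (abs_nonneg ε) (integral_nonneg fun _ => sq_nonneg _)
  have henergy : |ε| * ∫ x, gradNorm u x ^ 2 ≤ √τ * (√τ * (3 * A)) := by
    rw [← mul_assoc, Real.mul_self_sqrt hτ.le]
    calc |ε| * ∫ x, gradNorm u x ^ 2
        ≤ |ε| * ((τ + a) * (∫ x, ‖u x‖ ^ 2) + A) :=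
          mul_le_mul_of_nonneg_left (h.integral_gradNorm_sq_le ha hγ) (abs_nonneg ε)
      _ = (τ + a) * (|ε| * ∫ x, ‖u x‖ ^ 2) + |ε| * A := by ring
      _ ≤ (τ + τ) * A + τ * A := by gcongr; linarith
      _ = τ * (3 * A) := by ring
  have hyoung := integral_mul_mul_le_young (fun _ => abs_nonneg ε)
    (h.integrable_norm_mul_gradNorm.const_mul |ε|) (h.integrable_norm_sq.const_mul |ε|)
    (h.integrable_gradNorm_sq.const_mul |ε|) hs
  simp only [integral_const_mul] at hyoung
  have hmass' := mul_le_mul_of_nonneg_left hmass hs.le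
  have henergy' := (inv_mul_le_iff₀ hs).2 henergy
  linarith

theorem morreyEnergy_le_of_lt_abs (h : IsHelmholtzSolution a γ ε τ V g u) (ha : 0 ≤ a)
    (hγ : 0 ≤ γ) (hτ : 0 ≤ τ) (haτ : a ≤ τ) (hε : τ < |ε|) :
    morreyEnergy τ u ≤
      4 * ((∫ x, g x * ‖u x‖) + ∫ x, decayProfile a γ x * ‖u x‖ ^ 2) := by
  have hU : 0 ≤ ∫ x, ‖u x‖ ^ 2 := integral_nonneg fun _ => sq_nonneg _
  have hmass : τ * ∫ x, ‖u x‖ ^ 2 ≤ _ :=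
    (mul_le_mul_of_nonneg_right hε.le hU).trans (h.abs_mul_integral_norm_sq_le ha hγ)
  have henergy := h.integral_gradNorm_sq_le ha hγ
  have haU := mul_le_mul_of_nonneg_right haτ hU
  have hgrad := morreyNorm_le_inv_mul_integral one_pos h.integrable_gradNorm_sq
    fun _ => sq_nonneg _
  have hnorm := mul_le_mul_of_nonneg_left (morreyNorm_le_inv_mul_integral one_pos
    h.integrable_norm_sq fun _ => sq_nonneg _) hτ
  rw [inv_one, one_mul] at hgrad hnorm
  rw [morreyEnergy]
  linarith

lemma morreyEnergy_le_of_integral_le (h : IsHelmholtzSolution a γ ε τ V g u) (hτ : 0 < τ) {K : ℝ}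
    (hK : ∀ R, 1 ≤ R →
      ∫ x, R ^ 2 * morawetzWeight R x ^ 3 / 2 * (gradNorm u x ^ 2 + τ * ‖u x‖ ^ 2) ≤ K) :
    morreyEnergy τ u ≤ 12 * K := by
  have hnormSq := h.integrable_norm_sq.const_mul τ
  have hsum := h.integrable_gradNorm_sq.add hnormSq
  have hnonneg (x : Ed d) : 0 ≤ gradNorm u x ^ 2 + τ * ‖u x‖ ^ 2 := by positivity
  have hball (R : ℝ) (hR : 1 ≤ R) :
      R⁻¹ * ∫ x in ball 0 R, (gradNorm u x ^ 2 + τ * ‖u x‖ ^ 2) ≤ 6 * K :=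
    (inv_mul_setIntegral_ball_le hR hsum hnonneg).trans (by gcongr; exact hK R hR)
  have hK₀ : 0 ≤ 6 * K := le_trans
    (mul_nonneg (by norm_num) (integral_nonneg fun x => hnonneg x)) (hball 1 le_rfl)
  have hgrad : morreyNorm 1 (fun x => gradNorm u x ^ 2) ≤ 6 * K := by
    refine morreyNorm_le one_pos h.integrable_gradNorm_sq (fun _ => sq_nonneg _) hK₀
      fun R hR => le_trans ?_ (hball R hR)
    refine mul_le_mul_of_nonneg_left (integral_mono h.integrable_gradNorm_sq.integrableOn
      hsum.integrableOn fun x => ?_) (by positivity)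
    exact le_add_of_nonneg_right (by positivity)
  have hnorm : τ * morreyNorm 1 (fun x => ‖u x‖ ^ 2) ≤ 6 * K := by
    rw [← le_inv_mul_iff₀ hτ]
    refine morreyNorm_le one_pos h.integrable_norm_sq (fun _ => sq_nonneg _) (by positivity)
      fun R hR => ?_
    rw [le_inv_mul_iff₀ hτ, mul_left_comm, ← integral_const_mul]
    refine le_trans (mul_le_mul_of_nonneg_left (integral_mono hnormSq.integrableOn
      hsum.integrableOn fun x => ?_) (by positivity)) (hball R hR)
    exact le_add_of_nonneg_left (sq_nonneg _)
  rw [morreyEnergy]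
  linarith

theorem morreyEnergy_le_of_abs_le (h : IsHelmholtzSolution a γ ε τ V g u) (hd : 1 ≤ d)
    (ha : 1 ≤ a) (hγ : 0 ≤ γ) (hγ₂ : γ ≤ 2) (hdτ : d ≤ √τ) (haτ : a ≤ τ) (hε : |ε| ≤ τ) :
    morreyEnergy τ u ≤ 12 * (5 * (√τ * ∫ x, decayProfile a γ x * ‖u x‖ ^ 2)
      + (√τ)⁻¹ * (∫ x, decayProfile a γ x * gradNorm u x ^ 2)
      + (∫ x, g x * gradNorm u x) + 3 * (√τ * ∫ x, g x * ‖u x‖)) := by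
  have ha₀ : 0 ≤ a := by linarith
  have hτ : 0 < τ := by linarith
  have hd' : (1 : ℝ) ≤ d := mod_cast hd
  refine h.morreyEnergy_le_of_integral_le hτ fun R hR => ?_
  refine (h.integral_morawetz_le hd ha hγ hγ₂ hR).trans ?_
  have hyoung := integral_mul_mul_le_young (decayProfile_nonneg ha₀)
    (integrable_decayProfile_mul ha₀ hγ h.integrable_norm_mul_gradNorm)
    (integrable_decayProfile_mul ha₀ hγ h.integrable_norm_sq)
    (integrable_decayProfile_mul ha₀ hγ h.integrable_gradNorm_sq) (Real.sqrt_pos.2 hτ)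
  have habsorption := h.abs_mul_integral_norm_mul_gradNorm_le ha₀ hγ hτ haτ hε
  have hM := integral_decayProfile_mul_sq_nonneg γ ha₀ fun x => ‖u x‖
  have hA := h.integral_source_mul_norm_nonneg
  have hMgrad : 0 ≤ (√τ)⁻¹ * ∫ x, decayProfile a γ x * gradNorm u x ^ 2 :=
    mul_nonneg (by positivity) (integral_decayProfile_mul_sq_nonneg γ ha₀ (gradNorm u))
  have hdM := mul_le_mul_of_nonneg_right hdτ hM
  have hdA := mul_le_mul_of_nonneg_right hdτ hA
  have hsM := mul_le_mul_of_nonneg_right (hd'.trans hdτ) hM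
  have hsA := mul_le_mul_of_nonneg_right (hd'.trans hdτ) hA
  linarith

/-- For `|ε| > τ` the mass identity alone is enough. -/
theorem morreyEnergy_le (h : IsHelmholtzSolution a γ ε τ V g u) (hd : 1 ≤ d) (ha : 1 ≤ a)
    (hγ : 0 ≤ γ) (hγ₂ : γ ≤ 2) (hdτ : d ≤ √τ) (haτ : a ≤ τ) :
    morreyEnergy τ u ≤ 12 * (5 * (√τ * ∫ x, decayProfile a γ x * ‖u x‖ ^ 2)
      + (√τ)⁻¹ * (∫ x, decayProfile a γ x * gradNorm u x ^ 2)
      + (∫ x, g x * gradNorm u x) + 3 * (√τ * ∫ x, g x * ‖u x‖)) := by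
  rcases le_or_gt |ε| τ with hε | hε
  · exact h.morreyEnergy_le_of_abs_le hd ha hγ hγ₂ hdτ haτ hε
  have ha₀ : 0 ≤ a := by linarith
  have hs : 1 ≤ √τ := le_trans (mod_cast hd) hdτ
  refine (h.morreyEnergy_le_of_lt_abs ha₀ hγ (by linarith) haτ hε).trans ?_
  have hM := integral_decayProfile_mul_sq_nonneg γ ha₀ fun x => ‖u x‖
  have hA := h.integral_source_mul_norm_nonneg
  have hsM := mul_le_mul_of_nonneg_right hs hM
  have hsA := mul_le_mul_of_nonneg_right hs hA
  have hMgrad : 0 ≤ (√τ)⁻¹ * ∫ x, decayProfile a γ x * gradNorm u x ^ 2 :=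
    mul_nonneg (by positivity) (integral_decayProfile_mul_sq_nonneg γ ha₀ (gradNorm u))
  linarith [h.integral_source_mul_gradNorm_nonneg]

lemma integral_decayProfile_mul_le_morreyEnergy (h : IsHelmholtzSolution a γ ε τ V g u)
    (ha : 0 ≤ a) (hγ : 0 < γ) (hτ : 0 < τ) (hKτ : 120 * decayProfileNorm a γ ≤ √τ) :
    5 * (√τ * ∫ x, decayProfile a γ x * ‖u x‖ ^ 2)
        + (√τ)⁻¹ * (∫ x, decayProfile a γ x * gradNorm u x ^ 2) ≤ morreyEnergy τ u / 24 := by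
  have hs : 0 < √τ := Real.sqrt_pos.2 hτ
  have hnorm := integral_decayProfile_mul_le (φ := fun x => ‖u x‖ ^ 2) ha hγ one_pos one_le_two
    (h.contDiff.continuous.norm.pow 2).measurable h.integrable_norm_sq fun _ => sq_nonneg _
  have hgrad := integral_decayProfile_mul_le (φ := fun x => gradNorm u x ^ 2) ha hγ one_pos
    one_le_two (h.continuous_gradNorm.pow 2).measurable h.integrable_gradNorm_sq
    fun _ => sq_nonneg _
  have hXu : 0 ≤ morreyNorm 1 fun x => ‖u x‖ ^ 2 := morreyNorm_nonneg _
  have hXg : 0 ≤ morreyNorm 1 fun x => gradNorm u x ^ 2 := morreyNorm_nonneg _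
  have hnorm' : √τ * ∫ x, decayProfile a γ x * ‖u x‖ ^ 2 ≤
      τ / 120 * morreyNorm 1 (fun x => ‖u x‖ ^ 2) := by
    calc √τ * ∫ x, decayProfile a γ x * ‖u x‖ ^ 2
        ≤ √τ * (√τ / 120 * morreyNorm 1 (fun x => ‖u x‖ ^ 2)) := by
          gcongr
          exact hnorm.trans (by gcongr; linarith)
      _ = √τ ^ 2 / 120 * morreyNorm 1 (fun x => ‖u x‖ ^ 2) := by ring
      _ = _ := by rw [Real.sq_sqrt hτ.le]
  have hgrad' : (√τ)⁻¹ * (∫ x, decayProfile a γ x * gradNorm u x ^ 2) ≤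
      morreyNorm 1 (fun x => gradNorm u x ^ 2) / 120 := by
    rw [inv_mul_le_iff₀ hs]
    refine hgrad.trans ?_
    have := mul_le_mul_of_nonneg_right hKτ hXg
    linarith
  rw [morreyEnergy]
  linarith

lemma integral_source_mul_le_morreyEnergy (h : IsHelmholtzSolution a γ ε τ V g u) (hτ : 0 ≤ τ)
    (hN : (nXstarr 1 fun x => ENNReal.ofReal (g x) ^ 2) ≠ ⊤) :
    (∫ x, g x * gradNorm u x) + 3 * (√τ * ∫ x, g x * ‖u x‖) ≤
      4 * ((nXstarr 1 fun x => ENNReal.ofReal (g x) ^ 2).toReal * √(2 * morreyEnergy τ u)) := by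
  set n := (nXstarr 1 fun x => ENNReal.ofReal (g x) ^ 2).toReal
  have hXu : 0 ≤ τ * morreyNorm 1 fun x => ‖u x‖ ^ 2 := mul_nonneg hτ (morreyNorm_nonneg _)
  have hXg : 0 ≤ morreyNorm 1 fun x => gradNorm u x ^ 2 := morreyNorm_nonneg _
  have hgrad : ∫ x, g x * gradNorm u x ≤ n * √(2 * morreyEnergy τ u) := by
    refine (integral_mul_le_nXstarr_mul one_pos h.continuous_source.measurable
      h.continuous_gradNorm.measurable h.integrable_gradNorm_sq (gradNorm_nonneg u)
      h.integrable_source_mul_gradNorm hN).trans ?_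
    gcongr
    exact le_add_of_nonneg_right hXu
  have hnorm : √τ * ∫ x, g x * ‖u x‖ ≤ n * √(2 * morreyEnergy τ u) := by
    calc √τ * ∫ x, g x * ‖u x‖
        ≤ √τ * (n * √(2 * morreyNorm 1 (fun x => ‖u x‖ ^ 2))) := by
          gcongr
          exact integral_mul_le_nXstarr_mul one_pos h.continuous_source.measurable
            h.contDiff.continuous.norm.measurable h.integrable_norm_sq (fun x => norm_nonneg _)
            h.integrable_source_mul_norm hN
      _ = n * √(2 * (τ * morreyNorm 1 (fun x => ‖u x‖ ^ 2))) := by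
          rw [mul_left_comm, ← Real.sqrt_mul hτ, mul_left_comm]
      _ ≤ n * √(2 * morreyEnergy τ u) := by
          gcongr
          exact le_add_of_nonneg_left hXg
  linarith

/-- Half of the energy is absorbed, hence `Q ≤ 24 · 4 n √(2Q)` for the energy `Q` and the norm `n`
of the source. -/
theorem nX2r_le_nXstarr_sq (h : IsHelmholtzSolution a γ ε τ V g u) (hd : 1 ≤ d) (ha : 1 ≤ a)
    (hγ : 0 < γ) (hγ₂ : γ ≤ 2) (hdτ : d ≤ √τ) (haτ : a ≤ τ)
    (hKτ : 120 * decayProfileNorm a γ ≤ √τ) :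
    nX2r 1 (gradSq u) + ENNReal.ofReal τ * nX2r 1 (usq u) ≤
      ENNReal.ofReal 18432 * (nXstarr 1 fun x => ENNReal.ofReal (g x) ^ 2) ^ 2 := by
  have hτ : 0 < τ := by linarith
  rcases eq_or_ne (nXstarr 1 fun x => ENNReal.ofReal (g x) ^ 2) ⊤ with hN | hN
  · simp [hN]
  have henergy : 0 ≤ morreyEnergy τ u :=
    add_nonneg (morreyNorm_nonneg _) (mul_nonneg hτ.le (morreyNorm_nonneg _))
  have hsqrt : morreyEnergy τ u ≤
      96 * (nXstarr 1 fun x => ENNReal.ofReal (g x) ^ 2).toReal * √(2 * morreyEnergy τ u) := by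
    linarith [h.morreyEnergy_le hd ha hγ.le hγ₂ hdτ haτ,
      h.integral_source_mul_le_morreyEnergy hτ.le hN,
      h.integral_decayProfile_mul_le_morreyEnergy (by linarith) hγ hτ hKτ]
  rw [← h.ofReal_morreyEnergy hτ.le, ← ENNReal.ofReal_toReal hN,
    ← ENNReal.ofReal_pow toReal_nonneg, ← ENNReal.ofReal_mul (by norm_num)]
  refine ENNReal.ofReal_le_ofReal ((le_of_le_mul_sqrt_two_mul henergy hsqrt).trans_eq ?_)
  ring

end IsHelmholtzSolution

/-! ### The trace on circles -/

section Trace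

/-- The point of the plane with polar coordinates `(r, θ)`. -/
def polarPoint (r θ : ℝ) : Ed 2 := !₂[r * Real.cos θ, r * Real.sin θ]

lemma polarPoint_eq_smul (r θ : ℝ) : polarPoint r θ = r • polarPoint 1 θ := by
  ext i; fin_cases i <;> simp [polarPoint]

lemma continuous_polarPoint : Continuous fun p : ℝ × ℝ => polarPoint p.1 p.2 := by
  refine (PiLp.continuous_toLp 2 _).comp (continuous_pi fun i => ?_)
  fin_cases i
  · exact continuous_fst.mul (Real.continuous_cos.comp continuous_snd)
  · exact continuous_fst.mul (Real.continuous_sin.comp continuous_snd)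

lemma continuous_polarPoint_left (θ : ℝ) : Continuous fun r => polarPoint r θ :=
  continuous_polarPoint.comp (Continuous.prodMk_left θ)

lemma norm_polarPoint {r : ℝ} (hr : 0 ≤ r) (θ : ℝ) : ‖polarPoint r θ‖ = r := by
  refine (sq_eq_sq₀ (norm_nonneg _) hr).1 ?_
  rw [EuclideanSpace.real_norm_sq_eq, Fin.sum_univ_two]
  simp only [polarPoint, Matrix.cons_val_zero, Matrix.cons_val_one]
  linear_combination r ^ 2 * Real.sin_sq_add_cos_sq θ

lemma lipschitzWith_polarPoint {R : ℝ} (hR : 0 ≤ R) :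
    LipschitzWith R.toNNReal (polarPoint R) := by
  refine LipschitzWith.of_dist_le_mul fun s t => ?_
  rw [Real.coe_toNNReal _ hR, dist_eq_norm, Real.dist_eq]
  refine le_of_sq_le_sq ?_ (by positivity)
  rw [EuclideanSpace.real_norm_sq_eq, Fin.sum_univ_two, mul_pow, sq_abs]
  simp only [polarPoint, PiLp.sub_apply, Matrix.cons_val_zero, Matrix.cons_val_one]
  have hcos := Real.one_sub_sq_div_two_le_cos (x := s - t)
  rw [Real.cos_sub] at hcos
  have hchord : (Real.cos s - Real.cos t) ^ 2 + (Real.sin s - Real.sin t) ^ 2 ≤ (s - t) ^ 2 := by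
    linarith [Real.sin_sq_add_cos_sq s, Real.sin_sq_add_cos_sq t]
  linarith [mul_le_mul_of_nonneg_left hchord (sq_nonneg R)]

lemma exists_polarPoint_norm_eq (x : Ed 2) :
    ∃ θ ∈ Ioc (-Real.pi) Real.pi, polarPoint ‖x‖ θ = x := by
  let z : ℂ := ⟨x 0, x 1⟩
  have hz : ‖z‖ = ‖x‖ := by
    rw [EuclideanSpace.norm_eq, Fin.sum_univ_two, Complex.norm_eq_sqrt_sq_add_sq]
    simp [z]
  refine ⟨z.arg, Complex.arg_mem_Ioc z, ?_⟩
  ext i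
  fin_cases i
  · exact (congrArg (· * Real.cos z.arg) hz.symm).trans (Complex.norm_mul_cos_arg z)
  · exact (congrArg (· * Real.sin z.arg) hz.symm).trans (Complex.norm_mul_sin_arg z)

lemma hausdorffMeasure_restrict_sphere_le {R : ℝ} (hR : 0 ≤ R) :
    (μH[1] : Measure (Ed 2)).restrict (sphere 0 R) ≤
      ENNReal.ofReal R • (volume.restrict (Ioc (-Real.pi) Real.pi)).map (polarPoint R) := by
  have hmeas : Measurable (polarPoint R) := (lipschitzWith_polarPoint hR).continuous.measurable
  refine Measure.le_iff.2 fun s hs => ?_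
  rw [Measure.restrict_apply hs, Measure.smul_apply, Measure.map_apply hmeas hs,
    Measure.restrict_apply (hmeas hs), smul_eq_mul]
  have himage : s ∩ sphere 0 R ⊆
      polarPoint R '' (polarPoint R ⁻¹' s ∩ Ioc (-Real.pi) Real.pi) := by
    rintro x ⟨hxs, hx⟩
    obtain ⟨θ, hθ, hθx⟩ := exists_polarPoint_norm_eq x
    rw [mem_sphere_zero_iff_norm.1 hx] at hθx
    exact ⟨θ, ⟨mem_preimage.2 (hθx ▸ hxs), hθ⟩, hθx⟩
  have hlip := (lipschitzWith_polarPoint hR).hausdorffMeasure_image_le zero_le_one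
    (polarPoint R ⁻¹' s ∩ Ioc (-Real.pi) Real.pi)
  rw [hausdorffMeasure_real, ENNReal.rpow_one] at hlip
  exact (measure_mono himage).trans hlip

lemma sphInt_le_lintegral_polarPoint {R : ℝ} (hR : 0 ≤ R) {G : Ed 2 → ℝ≥0∞}
    (hG : Measurable G) :
    sphInt R G ≤ ENNReal.ofReal R * ∫⁻ θ in Ioo (-Real.pi) Real.pi, G (polarPoint R θ) := by
  have hmeas : Measurable (polarPoint R) := (lipschitzWith_polarPoint hR).continuous.measurable
  have hdim : ((2 : ℕ) : ℝ) - 1 = 1 := by norm_num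
  rw [sphInt, hdim]
  refine (lintegral_mono' (hausdorffMeasure_restrict_sphere_le hR) le_rfl).trans_eq ?_
  rw [lintegral_smul_measure, lintegral_map hG hmeas, smul_eq_mul, restrict_Ioo_eq_restrict_Ioc]

lemma lintegral_eq_lintegral_polarPoint {G : Ed 2 → ℝ≥0∞} (hG : Measurable G) :
    ∫⁻ x, G x = ∫⁻ θ in Ioo (-Real.pi) Real.pi, ∫⁻ r in Ioi 0,
      ENNReal.ofReal r * G (polarPoint r θ) := by
  let e : Ed 2 ≃ᵐ ℝ × ℝ :=
    (MeasurableEquiv.toLp 2 (Fin 2 → ℝ)).symm.trans MeasurableEquiv.finTwoArrow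
  have he : MeasurePreserving e :=
    (volume_preserving_finTwoArrow ℝ).comp
      (EuclideanSpace.volume_preserving_symm_measurableEquiv_toLp (Fin 2))
  have hpolar (p : ℝ × ℝ) : e.symm (polarCoord.symm p) = polarPoint p.1 p.2 := by
    rw [MeasurableEquiv.symm_apply_eq]
    rfl
  have hmeas : Measurable fun p : ℝ × ℝ => ENNReal.ofReal p.1 * G (polarPoint p.1 p.2) :=
    measurable_fst.ennreal_ofReal.mul (hG.comp continuous_polarPoint.measurable)
  have htarget : polarCoord.target = Ioi (0 : ℝ) ×ˢ Ioo (-Real.pi) Real.pi := rfl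
  rw [← (he.symm e).lintegral_comp hG, ← lintegral_comp_polarCoord_symm]
  simp only [hpolar, smul_eq_mul]
  rw [htarget, Measure.volume_eq_prod, ← Measure.prod_restrict,
    lintegral_prod_symm _ hmeas.aemeasurable]

lemma setLIntegral_ball_eq_lintegral_polarPoint (R : ℝ) {G : Ed 2 → ℝ≥0∞} (hG : Measurable G) :
    ∫⁻ x in ball 0 R, G x = ∫⁻ θ in Ioo (-Real.pi) Real.pi, ∫⁻ r in Ioo 0 R,
      ENNReal.ofReal r * G (polarPoint r θ) := by
  rw [← lintegral_indicator measurableSet_ball,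
    lintegral_eq_lintegral_polarPoint (hG.indicator measurableSet_ball)]
  refine lintegral_congr fun θ => ?_
  rw [← lintegral_indicator measurableSet_Ioi, ← lintegral_indicator measurableSet_Ioo]
  refine lintegral_congr fun r => ?_
  rcases le_or_gt r 0 with hr | hr
  · simp [indicator, hr.not_gt]
  · simp [indicator, hr, norm_polarPoint hr.le]

section Ray

variable {u : Ed 2 → ℂ} {r R : ℝ}

lemma hasDerivAt_sq_mul_norm_sq_polarPoint (hu : Differentiable ℝ u) (r θ : ℝ) :
    HasDerivAt (fun r => r ^ 2 * ‖u (polarPoint r θ)‖ ^ 2)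
      (2 * r * ‖u (polarPoint r θ)‖ ^ 2 + r ^ 2 *
        (2 * inner ℝ (u (polarPoint r θ)) (fderiv ℝ u (polarPoint r θ) (polarPoint 1 θ)))) r := by
  have hray : HasDerivAt (fun r => polarPoint r θ) (polarPoint 1 θ) r := by
    rw [funext fun r => polarPoint_eq_smul r θ]
    simpa using (hasDerivAt_id r).smul_const (polarPoint 1 θ)
  have hur := (hu (polarPoint r θ)).hasFDerivAt.comp_hasDerivAt r hray
  exact ((hasDerivAt_pow 2 r).mul hur.norm_sq).congr_deriv (by simp)

lemma radial_density_le (u : Ed 2 → ℂ) (hR : 1 ≤ R) (hr : r ∈ Icc 0 R) (θ : ℝ) :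
    2 * r * ‖u (polarPoint r θ)‖ ^ 2 + r ^ 2 *
        (2 * inner ℝ (u (polarPoint r θ)) (fderiv ℝ u (polarPoint r θ) (polarPoint 1 θ))) ≤
      r * (3 * R * (‖u (polarPoint r θ)‖ ^ 2 + gradNorm u (polarPoint r θ) ^ 2)) := by
  obtain ⟨hr₀, hrR⟩ := hr
  have hderiv : ‖fderiv ℝ u (polarPoint r θ) (polarPoint 1 θ)‖ ≤ gradNorm u (polarPoint r θ) := by
    simpa only [norm_polarPoint zero_le_one, one_mul] using
      norm_fderiv_apply_le_mul_gradNorm u (polarPoint r θ) (polarPoint 1 θ)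
  have hinner : inner ℝ (u (polarPoint r θ)) (fderiv ℝ u (polarPoint r θ) (polarPoint 1 θ)) ≤
      ‖u (polarPoint r θ)‖ * gradNorm u (polarPoint r θ) :=
    (real_inner_le_norm _ _).trans (mul_le_mul_of_nonneg_left hderiv (norm_nonneg _))
  set U := ‖u (polarPoint r θ)‖
  set g := gradNorm u (polarPoint r θ)
  have hyoung : 2 * inner ℝ (u (polarPoint r θ)) (fderiv ℝ u (polarPoint r θ) (polarPoint 1 θ)) ≤
      U ^ 2 + g ^ 2 := by
    linarith [two_mul_le_add_sq U g]
  calc _ ≤ 2 * r * U ^ 2 + r ^ 2 * (U ^ 2 + g ^ 2) := by gcongr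
    _ = r * (2 * 1 * U ^ 2 + r * (U ^ 2 + g ^ 2)) := by ring
    _ ≤ r * (2 * R * (U ^ 2 + g ^ 2) + R * (U ^ 2 + g ^ 2)) := by
        gcongr
        exact le_add_of_nonneg_right (sq_nonneg g)
    _ = _ := by ring

/-- The factor `r²` makes the boundary term at the origin vanish and leaves the Jacobian `r` of
polar coordinates after differentiation. -/
lemma sq_mul_norm_sq_polarPoint_le_integral (hu : ContDiff ℝ 1 u) (hR : 1 ≤ R) (θ : ℝ) :
    R ^ 2 * ‖u (polarPoint R θ)‖ ^ 2 ≤ ∫ r in 0..R,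
      r * (3 * R * (‖u (polarPoint r θ)‖ ^ 2 + gradNorm u (polarPoint r θ) ^ 2)) := by
  have hray := continuous_polarPoint_left θ
  have hcg : Continuous fun r => gradNorm u (polarPoint r θ) := (continuous_gradNorm hu).comp hray
  have hftc := intervalIntegral.integral_eq_sub_of_hasDerivAt (a := 0) (b := R)
    (fun r _ => hasDerivAt_sq_mul_norm_sq_polarPoint (hu.differentiable one_ne_zero) r θ)
    (Continuous.intervalIntegrable (by fun_prop) 0 R)
  calc R ^ 2 * ‖u (polarPoint R θ)‖ ^ 2
      = R ^ 2 * ‖u (polarPoint R θ)‖ ^ 2 - 0 ^ 2 * ‖u (polarPoint 0 θ)‖ ^ 2 := by ring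
    _ ≤ _ := hftc.symm.trans_le <| intervalIntegral.integral_mono_on (zero_le_one.trans hR)
        (Continuous.intervalIntegrable (by fun_prop) 0 R)
        (Continuous.intervalIntegrable (by fun_prop) 0 R) fun r hr => radial_density_le u hR hr θ

lemma ofReal_sq_mul_usq_polarPoint_le (hu : ContDiff ℝ 1 u) (hR : 1 ≤ R) (θ : ℝ) :
    ENNReal.ofReal (R ^ 2) * usq u (polarPoint R θ) ≤ ∫⁻ r in Ioo 0 R, ENNReal.ofReal r *
      (ENNReal.ofReal (3 * R) * (usq u (polarPoint r θ) + gradSq u (polarPoint r θ))) := by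
  have hR₀ : 0 ≤ R := zero_le_one.trans hR
  have hray := continuous_polarPoint_left θ
  have hcg : Continuous fun r => gradNorm u (polarPoint r θ) := (continuous_gradNorm hu).comp hray
  rw [← ofReal_norm_sq_eq_usq, ← ENNReal.ofReal_mul (sq_nonneg R)]
  refine (ENNReal.ofReal_le_ofReal (sq_mul_norm_sq_polarPoint_le_integral hu hR θ)).trans_eq ?_
  rw [intervalIntegral.integral_of_le hR₀, restrict_Ioo_eq_restrict_Ioc,
    ofReal_integral_eq_lintegral_ofReal]
  · refine setLIntegral_congr_fun measurableSet_Ioc fun r hr => ?_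
    simp only [ENNReal.ofReal_mul hr.1.le, ENNReal.ofReal_mul (mul_nonneg zero_le_three hR₀),
      ENNReal.ofReal_add (sq_nonneg _) (sq_nonneg _), ofReal_norm_sq_eq_usq,
      ofReal_gradNorm_sq_eq_gradSq]
  · exact (Continuous.integrableOn_Icc (by fun_prop)).mono_set Ioc_subset_Icc_self
  · filter_upwards [ae_restrict_mem measurableSet_Ioc] with r hr
    exact mul_nonneg hr.1.le (by positivity)

end Ray

section Circle

variable {u : Ed 2 → ℂ} {R : ℝ}

lemma measurable_usq {d : ℕ} {u : Ed d → ℂ} (hu : Continuous u) : Measurable (usq u) :=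
  hu.measurable.nnnorm.coe_nnreal_ennreal.pow_const 2

lemma measurable_gradSq {d : ℕ} {u : Ed d → ℂ} (hu : ContDiff ℝ 1 u) : Measurable (gradSq u) :=
  Finset.measurable_fun_sum _ fun _ _ =>
    measurable_usq ((hu.continuous_fderiv one_ne_zero).clm_apply continuous_const)

lemma lintegral_usq_polarPoint_le (hu : ContDiff ℝ 1 u) (hR : 1 ≤ R) :
    ∫⁻ θ in Ioo (-Real.pi) Real.pi, usq u (polarPoint R θ) ≤
      3 * (nX2r 1 (usq u) + nX2r 1 (gradSq u)) := by
  have hR₀ : 0 < R := zero_lt_one.trans_le hR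
  have hmu := measurable_usq hu.continuous
  have hball : ∫⁻ x in ball 0 R, (usq u x + gradSq u x) ≤
      ENNReal.ofReal R * (nX2r 1 (usq u) + nX2r 1 (gradSq u)) := by
    rw [lintegral_add_left hmu, mul_add]
    exact add_le_add (setLIntegral_ball_le_mul_nX2r hR₀ hR _)
      (setLIntegral_ball_le_mul_nX2r hR₀ hR _)
  refine (ENNReal.mul_le_mul_iff_right (ENNReal.ofReal_pos.2 (sq_pos_of_pos hR₀)).ne'
    ENNReal.ofReal_ne_top).1 ?_
  calc ENNReal.ofReal (R ^ 2) * ∫⁻ θ in Ioo (-Real.pi) Real.pi, usq u (polarPoint R θ)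
      ≤ ∫⁻ x in ball 0 R, ENNReal.ofReal (3 * R) * (usq u x + gradSq u x) := by
        rw [← lintegral_const_mul' _ _ ENNReal.ofReal_ne_top,
          setLIntegral_ball_eq_lintegral_polarPoint R
            ((hmu.fun_add (measurable_gradSq hu)).const_mul _)]
        exact lintegral_mono fun θ => ofReal_sq_mul_usq_polarPoint_le hu hR θ
    _ ≤ ENNReal.ofReal (3 * R) *
        (ENNReal.ofReal R * (nX2r 1 (usq u) + nX2r 1 (gradSq u))) := by
        rw [lintegral_const_mul' _ _ ENNReal.ofReal_ne_top]
        gcongr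
    _ = ENNReal.ofReal (R ^ 2) * (3 * (nX2r 1 (usq u) + nX2r 1 (gradSq u))) := by
        rw [ENNReal.ofReal_mul zero_le_three, ENNReal.ofReal_pow hR₀.le, ENNReal.ofReal_ofNat]
        ring

theorem inv_sq_mul_sphInt_usq_le (hu : ContDiff ℝ 1 u) (hR : 1 ≤ R) :
    (ENNReal.ofReal (R ^ 2))⁻¹ * sphInt R (usq u) ≤
      3 * (nX2r 1 (usq u) + nX2r 1 (gradSq u)) := by
  have hR₀ : 0 < R := zero_lt_one.trans_le hR
  rw [ENNReal.inv_mul_le_iff (ENNReal.ofReal_pos.2 (sq_pos_of_pos hR₀)).ne' ENNReal.ofReal_ne_top]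
  calc sphInt R (usq u)
      ≤ ENNReal.ofReal R * ∫⁻ θ in Ioo (-Real.pi) Real.pi, usq u (polarPoint R θ) :=
        sphInt_le_lintegral_polarPoint hR₀.le (measurable_usq hu.continuous)
    _ ≤ _ := mul_le_mul' (ENNReal.ofReal_le_ofReal (le_self_pow₀ hR two_ne_zero))
        (lintegral_usq_polarPoint_le hu hR)

end Circle

end Trace

/-! ### Reduction to a continuous source -/

section Reduction

variable {d : ℕ} {a a' γ γ' ε τ : ℝ} {V V₂ : Ed d → ℝ} {u f : Ed d → ℂ}

lemma mul_one_add_norm_rpow_mono {c c' : ℝ} (ha' : 0 ≤ a') (haa' : a ≤ a') (hcc' : c ≤ c')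
    (x : Ed d) : a * (1 + ‖x‖) ^ c ≤ a' * (1 + ‖x‖) ^ c' :=
  mul_le_mul haa' (Real.rpow_le_rpow_of_exponent_le (le_add_of_nonneg_right (norm_nonneg x)) hcc')
    (by positivity) ha'

lemma decayProfile_mono (ha' : 0 ≤ a') (haa' : a ≤ a') (hγ : γ' ≤ γ) (x : Ed d) :
    decayProfile a γ x ≤ decayProfile a' γ' x :=
  mul_one_add_norm_rpow_mono ha' haa' (by linarith) x

lemma IsLongRange.mono (hV : IsLongRange a γ V) (ha' : 0 ≤ a') (haa' : a ≤ a') (hγ : γ' ≤ γ) :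
    IsLongRange a' γ' V where
  contDiff := hV.contDiff
  abs_le x := (hV.abs_le x).trans (mul_one_add_norm_rpow_mono ha' haa' (neg_le_neg hγ) x)
  radialDeriv_le x := (hV.radialDeriv_le x).trans (decayProfile_mono ha' haa' hγ x)

lemma continuous_helmholtz (hV : Continuous V) (hu : ContDiff ℝ 2 u) :
    Continuous (helmholtz ε τ V u) := by
  have hlap : Continuous (lap u) := continuous_finsetSum _ fun i _ =>
    ((contDiff_pd hu i).continuous_fderiv one_ne_zero).clm_apply continuous_const
  unfold helmholtz
  fun_prop

lemma helmholtz_mul_add_smul (σ : ℝ) (x : Ed d) :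
    helmholtz (σ * ε) τ V u x + V₂ x • u x =
      -lap u x + ((V x : ℂ) + (V₂ x : ℂ)) * u x + (σ : ℂ) * ((ε : ℂ) * Complex.I) * u x
        - (τ : ℂ) * u x := by
  simp only [helmholtz, Complex.real_smul]
  push_cast
  ring

/-- The part of `helmholtz ε τ V u` that a short-range potential of size `decayProfile a γ` cannot
account for. It serves as a continuous substitute for the source `f`, which need not even be
measurable. -/
def helmholtzExcess (a γ ε τ : ℝ) (V : Ed d → ℝ) (u : Ed d → ℂ) (x : Ed d) : ℝ :=
  max (‖helmholtz ε τ V u x‖ - decayProfile a γ x * ‖u x‖) 0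

lemma continuous_helmholtzExcess (hV : Continuous V) (hu : ContDiff ℝ 2 u) :
    Continuous (helmholtzExcess a γ ε τ V u) :=
  ((continuous_helmholtz hV hu).norm.sub (continuous_decayProfile.mul hu.continuous.norm)).max
    continuous_const

lemma helmholtzExcess_nonneg (x : Ed d) : 0 ≤ helmholtzExcess a γ ε τ V u x :=
  le_max_right _ _

lemma helmholtzExcess_le_norm {x : Ed d} (hV₂ : |V₂ x| ≤ decayProfile a γ x)
    (hf : helmholtz ε τ V u x + V₂ x • u x = f x) :
    helmholtzExcess a γ ε τ V u x ≤ ‖f x‖ := by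
  refine max_le ?_ (norm_nonneg _)
  calc ‖helmholtz ε τ V u x‖ - decayProfile a γ x * ‖u x‖
      ≤ ‖helmholtz ε τ V u x‖ - ‖V₂ x • u x‖ := by
        rw [norm_smul, Real.norm_eq_abs]
        gcongr
    _ ≤ ‖helmholtz ε τ V u x + V₂ x • u x‖ := norm_sub_le_norm_add _ _
    _ = ‖f x‖ := by rw [hf]

lemma integrable_sq_of_lintegral_lt_top {φ : Ed d → ℝ} (hφ : Continuous φ)
    (hfin : ∫⁻ x, ENNReal.ofReal (φ x ^ 2) < ⊤) : Integrable fun x => φ x ^ 2 :=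
  ⟨(hφ.pow 2).aestronglyMeasurable,
    (hasFiniteIntegral_iff_ofReal (Filter.Eventually.of_forall fun _ => sq_nonneg _)).2 hfin⟩

lemma ofReal_helmholtzExcess_sq_le_usq {x : Ed d} (hV₂ : |V₂ x| ≤ decayProfile a γ x)
    (hf : helmholtz ε τ V u x + V₂ x • u x = f x) :
    ENNReal.ofReal (helmholtzExcess a γ ε τ V u x) ^ 2 ≤ usq f x := by
  rw [← ofReal_norm_sq_eq_usq, ENNReal.ofReal_pow (norm_nonneg _)]
  gcongr
  exact helmholtzExcess_le_norm hV₂ hf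

lemma isHelmholtzSolution_helmholtzExcess (hV : IsLongRange a γ V) (hu : ContDiff ℝ 2 u)
    (hV₂ : ∀ x, |V₂ x| ≤ decayProfile a γ x)
    (hf : ∀ x, helmholtz ε τ V u x + V₂ x • u x = f x)
    (hu₂ : ∫⁻ x, usq u x < ⊤) (hgrad₂ : ∫⁻ x, gradSq u x < ⊤) (hf₂ : ∫⁻ x, usq f x < ⊤) :
    IsHelmholtzSolution a γ ε τ V (helmholtzExcess a γ ε τ V u) u where
  longRange := hV
  contDiff := hu
  continuous_source := continuous_helmholtzExcess hV.contDiff.continuous hu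
  source_nonneg := helmholtzExcess_nonneg
  norm_helmholtz_le x := sub_le_iff_le_add.1 (le_max_left _ _)
  integrable_norm_sq := integrable_sq_of_lintegral_lt_top hu.continuous.norm
    (by simpa only [ofReal_norm_sq_eq_usq] using hu₂)
  integrable_gradNorm_sq :=
    integrable_sq_of_lintegral_lt_top (continuous_gradNorm (hu.of_le one_le_two))
      (by simpa only [ofReal_gradNorm_sq_eq_gradSq] using hgrad₂)
  integrable_source_sq :=
    integrable_sq_of_lintegral_lt_top (continuous_helmholtzExcess hV.contDiff.continuous hu) <|
      (lintegral_mono fun x => by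
        rw [ENNReal.ofReal_pow (helmholtzExcess_nonneg x)]
        exact ofReal_helmholtzExcess_sq_le_usq (hV₂ x) (hf x)).trans_lt hf₂

end Reduction

theorem IsHelmholtzSolution.nX2r_add_iSup_sphInt_le {a γ ε τ : ℝ} {V g : Ed 2 → ℝ}
    {u : Ed 2 → ℂ} (h : IsHelmholtzSolution a γ ε τ V g u) (ha : 1 ≤ a) (hγ : 0 < γ)
    (hγ₂ : γ ≤ 2) (hτ : 2 ≤ √τ) (haτ : a ≤ τ) (hKτ : 120 * decayProfileNorm a γ ≤ √τ) :
    nX2r 1 (gradSq u) + ENNReal.ofReal τ * nX2r 1 (usq u) +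
        (⨆ (R : ℝ) (_ : 1 ≤ R), (ENNReal.ofReal (R ^ 2))⁻¹ * sphInt R (usq u)) ≤
      ENNReal.ofReal (4 * 18432) * (nXstarr 1 fun x => ENNReal.ofReal (g x) ^ 2) ^ 2 := by
  have henergy := h.nX2r_le_nXstarr_sq one_le_two ha hγ hγ₂ (mod_cast hτ) haτ hKτ
  set Q := nX2r 1 (gradSq u) + ENNReal.ofReal τ * nX2r 1 (usq u) with hQ
  have htrace : (⨆ (R : ℝ) (_ : 1 ≤ R), (ENNReal.ofReal (R ^ 2))⁻¹ * sphInt R (usq u)) ≤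
      3 * Q := by
    refine iSup₂_le fun R hR =>
      (inv_sq_mul_sphInt_usq_le (h.contDiff.of_le one_le_two) hR).trans ?_
    rw [hQ, add_comm (nX2r 1 (usq u))]
    gcongr
    exact le_mul_of_one_le_left zero_le (ENNReal.one_le_ofReal.2 (ha.trans haτ))
  calc _ ≤ Q + 3 * Q := by gcongr
    _ = ENNReal.ofReal 4 * Q := by rw [ENNReal.ofReal_ofNat]; ring
    _ ≤ _ := by
        rw [ENNReal.ofReal_mul zero_le_four, mul_assoc]
        gcongr

/-- resolvent estimate for long range potentials without smallness
assumptions in dimension 2, for a suitable `τ₀` and all `τ ≥ B(τ₀)`. -/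
theorem stmt_8 (a γ : ℝ) (ha : 0 < a) (hγ : 0 < γ) :
    ∃ τ₀ B C : ℝ, 0 < τ₀ ∧ 0 < B ∧ 0 < C ∧
      ∀ (V₁ V₂ : Ed 2 → ℝ), ContDiff ℝ 1 V₁ →
      (∀ x : Ed 2, |V₁ x| ≤ a * (1 + ‖x‖) ^ (-γ)) →
      (∀ x : Ed 2, |V₂ x| ≤ a * (1 + ‖x‖) ^ (-γ - 1)) →
      (∀ x : Ed 2, radialDeriv V₁ x ≤ a * (1 + ‖x‖) ^ (-γ - 1)) →
      ∀ (ε τ : ℝ), ε ≠ 0 → B ≤ τ →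
      ∀ (σ : ℝ), σ = 1 ∨ σ = -1 →
      ∀ (u f : Ed 2 → ℂ), ContDiff ℝ 2 u →
      (∫⁻ x, usq u x) < ⊤ → (∫⁻ x, gradSq u x) < ⊤ → (∫⁻ x, usq f x) < ⊤ →
      (∀ x, -lap u x + ((V₁ x : ℂ) + (V₂ x : ℂ)) * u x
        + (σ : ℂ) * ((ε : ℂ) * Complex.I) * u x - (τ : ℂ) * u x = f x) →
      nX2r τ₀ (gradSq u)
        + ENNReal.ofReal τ * nX2r τ₀ (usq u)
        + (⨆ (R : ℝ) (_ : τ₀ ≤ R), (ENNReal.ofReal (R^2))⁻¹ * sphInt R (usq u))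
      ≤ ENNReal.ofReal C * (nXstarr τ₀ (usq f)) ^ 2 := by
  set a' := max a 1
  set γ' := min γ 2
  set K := decayProfileNorm a' γ'
  have ha'₁ : 1 ≤ a' := le_max_right a 1
  have ha'₀ : 0 ≤ a' := zero_le_one.trans ha'₁
  have haa' : a ≤ a' := le_max_left a 1
  have hγγ' : γ' ≤ γ := min_le_left γ 2
  refine ⟨1, a' + 2 ^ 2 + (120 * K) ^ 2, 4 * 18432, one_pos, by positivity, by norm_num, ?_⟩
  intro V₁ V₂ hV₁ hV₁_le hV₂_le hV₁_radial ε τ _ hBτ σ _ u f hu hu₂ hgrad₂ hf₂ heq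
  have hV : IsLongRange a' γ' V₁ :=
    (IsLongRange.mk hV₁ hV₁_le hV₁_radial).mono ha'₀ haa' hγγ'
  have hV₂ (x : Ed 2) : |V₂ x| ≤ decayProfile a' γ' x :=
    (hV₂_le x).trans (decayProfile_mono ha'₀ haa' hγγ' x)
  have hf (x : Ed 2) : helmholtz (σ * ε) τ V₁ u x + V₂ x • u x = f x :=
    (helmholtz_mul_add_smul σ x).trans (heq x)
  have hsol := isHelmholtzSolution_helmholtzExcess hV hu hV₂ hf hu₂ hgrad₂ hf₂
  refine (hsol.nX2r_add_iSup_sphInt_le ha'₁ (lt_min hγ two_pos) (min_le_right γ 2)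
    (Real.le_sqrt_of_sq_le (by nlinarith)) (by nlinarith)
    (Real.le_sqrt_of_sq_le (by nlinarith))).trans ?_
  gcongr
  exact nXstarr_mono fun x => ofReal_helmholtzExcess_sq_le_usq (hV₂ x) (hf x)
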